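/- Let K be a number field which is neither ℚ nor an imaginary quadratic field (equivalently, K has at least two archimedean places), with ring of integers O_K, and let k ≥ 1 be an integer. Then the subgroup of SL_2(O_K) generated by the matrices (1, b; 0, 1) and (1, 0; c, 1), where b and c range over the ideal kO_K, has finite index in SL_2(O_K). -/

import Mathlib

open NumberField

/-!
Write `R = 𝓞 K` and `d = [K : ℚ]`, let `E k` be the group generated by the elementary matrices with
off-diagonal entry in `kR`, and `L k` the principal congruence subgroup of level `k`. Since `E k`
decreases when `k` is replaced by a multiple, `k` may be assumed even. The proof shows that
`L (k²)` normalizes `E k` and that `A = L (k²) / (E k ∩ L (k²))` is a finite abelian group.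

*Two topologies.* As `K` has two archimedean places, `R` has a unit of infinite order. Conjugating
by diagonal matrices of units, and interpolating `1` by the functions `1 / (η + n)`, one finds that
for each `s ∈ SL₂(K)` and each `k` some `E k'` is conjugated by `s` into `E k` (`EK_conj`). So the
groups `E k` define a group topology on `SL₂(K)`, finer than the congruence topology. The kernel of
the map between the two completions is represented by the sequences in `IsC`, and every element of
`L (k²)` agrees modulo `E k` with such a sequence (`exists_isC`).

*Centrality.* Let `w` be a unit. By `exists_integer_row` and Dirichlet's theorem, elementary
operations of level `k` turn the upper left entry of a matrix of high level into a product `p₁ p₂`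
of two rational primes in prescribed inverse residue classes (`exists_two_primes`). If `p₁ p₂`
divides `w ^ (2 j) - 1`, then conjugation by the diagonal matrix `D (w ^ j)` changes the matrix by
elementary matrices only. The order of `w` modulo `p` divides `HZ d p = |GL_d(𝔽_p)|`, and by varying
the residue classes the greatest common divisor of the resulting exponents is bounded by a constant
`m₀ d` that depends on `d` only. Hence `D (w ^ m₀ d)` acts trivially on the kernel. The elements of
`SL₂(K)` acting trivially form a normal subgroup `Z`; containing a diagonal matrix of infinite order,
it is all of `SL₂(K)` (`Z_eq_top`). It follows that `L (k²)` normalizes `E k`, that `A` is abelian,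
and that conjugation by diagonal matrices over `K` acts trivially modulo `E k` on deep congruence
subgroups.

*Symbols.* The class in `A` of a matrix depends only on its first row `(a, b)`; call it `sym a b`.
For a prime `a = p`, multiplying `b` by `x²` multiplies the symbol by a factor `phi p x` independent
of `b` and multiplicative in `x` modulo `p`. So `phi p x` has finite order dividing `HZ d p`; it does
not change when `p` is replaced by another prime congruent to `p` modulo `k⁴ x²`, and Dirichlet's
theorem provides such a prime for which the common divisor of the two bounds divides a constant
`expo K k` (`phi_pow_expo`).

*Finiteness.* Any finite subset of `A` consists of symbols `sym p b` with one common prime `p`, which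
may be taken large. With `n = 2 * expo K k`, the symbol `sym p b` depends only on the class of `b` in
the units of `R / p` modulo `n`-th powers, a group with at most `n ^ d` elements (`card_le`).
-/

local notation "SL2" => Matrix.SpecialLinearGroup (Fin 2)

namespace UnipGen

/-! ### Matrices, elementary groups and congruence groups -/

section Generic

variable {S : Type*} [CommRing S]

/-- The matrix `(a, b; c, d)` of determinant one. -/
def mk (a b c d : S) (h : a * d - b * c = 1) : SL2 S :=
  ⟨!![a, b; c, d], by rw [Matrix.det_fin_two_of, h]⟩

/-- The upper unipotent matrix `(1, x; 0, 1)`. -/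
def U (x : S) : SL2 S := mk 1 x 0 1 (by ring)

/-- The lower unipotent matrix `(1, 0; x, 1)`. -/
def V (x : S) : SL2 S := mk 1 0 x 1 (by ring)

/-- The diagonal matrix `(u, 0; 0, u⁻¹)`. -/
def D (u : Sˣ) : SL2 S := mk (u : S) 0 0 ((u⁻¹ : Sˣ) : S) (by simp)

/-- The Weyl element `(0, 1; -1, 0)`. -/
def W (S : Type*) [CommRing S] : SL2 S := mk 0 1 (-1) 0 (by ring)

section entries
variable (a b c d x : S) (h : a * d - b * c = 1) (u : Sˣ) (g g' : SL2 S)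

@[simp] lemma mk_00 : (mk a b c d h) 0 0 = a := rfl
@[simp] lemma mk_01 : (mk a b c d h) 0 1 = b := rfl
@[simp] lemma mk_10 : (mk a b c d h) 1 0 = c := rfl
@[simp] lemma mk_11 : (mk a b c d h) 1 1 = d := rfl
@[simp] lemma U_00 : (U x) 0 0 = 1 := rfl
@[simp] lemma U_01 : (U x) 0 1 = x := rfl
@[simp] lemma U_10 : (U x) 1 0 = 0 := rfl
@[simp] lemma U_11 : (U x) 1 1 = 1 := rfl
@[simp] lemma V_00 : (V x) 0 0 = 1 := rfl
@[simp] lemma V_01 : (V x) 0 1 = 0 := rfl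
@[simp] lemma V_10 : (V x) 1 0 = x := rfl
@[simp] lemma V_11 : (V x) 1 1 = 1 := rfl
@[simp] lemma D_00 : (D u) 0 0 = u := rfl
@[simp] lemma D_01 : (D u) 0 1 = 0 := rfl
@[simp] lemma D_10 : (D u) 1 0 = 0 := rfl
@[simp] lemma D_11 : (D u) 1 1 = ((u⁻¹ : Sˣ) : S) := rfl
@[simp] lemma W_00 : (W S) 0 0 = 0 := rfl
@[simp] lemma W_01 : (W S) 0 1 = 1 := rfl
@[simp] lemma W_10 : (W S) 1 0 = -1 := rfl
@[simp] lemma W_11 : (W S) 1 1 = 0 := rfl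
@[simp] lemma one_00 : (1 : SL2 S) 0 0 = 1 := rfl
@[simp] lemma one_01 : (1 : SL2 S) 0 1 = 0 := rfl
@[simp] lemma one_10 : (1 : SL2 S) 1 0 = 0 := rfl
@[simp] lemma one_11 : (1 : SL2 S) 1 1 = 1 := rfl

@[simp] lemma mul_ij (i j : Fin 2) : (g * g') i j = g i 0 * g' 0 j + g i 1 * g' 1 j := by
  simp [Matrix.SpecialLinearGroup.coe_mul, Matrix.mul_apply, Fin.sum_univ_two]

lemma det_eq : g 0 0 * g 1 1 - g 0 1 * g 1 0 = 1 := by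
  have := g.2
  rwa [Matrix.det_fin_two] at this

@[simp] lemma inv_00 : (g⁻¹) 0 0 = g 1 1 := by
  simp [Matrix.SpecialLinearGroup.coe_inv, Matrix.adjugate_fin_two]
@[simp] lemma inv_01 : (g⁻¹) 0 1 = - g 0 1 := by
  simp [Matrix.SpecialLinearGroup.coe_inv, Matrix.adjugate_fin_two]
@[simp] lemma inv_10 : (g⁻¹) 1 0 = - g 1 0 := by
  simp [Matrix.SpecialLinearGroup.coe_inv, Matrix.adjugate_fin_two]
@[simp] lemma inv_11 : (g⁻¹) 1 1 = g 0 0 := by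
  simp [Matrix.SpecialLinearGroup.coe_inv, Matrix.adjugate_fin_two]

end entries

lemma ext2 {g h : SL2 S} (h00 : g 0 0 = h 0 0) (h01 : g 0 1 = h 0 1) (h10 : g 1 0 = h 1 0)
    (h11 : g 1 1 = h 1 1) : g = h := by
  ext i j
  fin_cases i <;> fin_cases j <;> assumption

lemma U_add (x y : S) : U (x + y) = U x * U y := by
  apply ext2 <;> simp [add_comm]

lemma V_add (x y : S) : V (x + y) = V x * V y := by
  apply ext2 <;> simp

lemma U_zero : U (0 : S) = 1 := by apply ext2 <;> simp

lemma V_zero : V (0 : S) = 1 := by apply ext2 <;> simp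

lemma U_neg (x : S) : U (-x) = (U x)⁻¹ := by apply ext2 <;> simp

lemma V_neg (x : S) : V (-x) = (V x)⁻¹ := by apply ext2 <;> simp

lemma D_mul (u v : Sˣ) : D (u * v) = D u * D v := by
  apply ext2 <;> simp [mul_comm]

lemma D_one : D (1 : Sˣ) = 1 := by apply ext2 <;> simp

lemma D_inv (u : Sˣ) : D u⁻¹ = (D u)⁻¹ := by apply ext2 <;> simp

lemma D_conj_U (u : Sˣ) (x : S) : D u * U x * (D u)⁻¹ = U ((u : S) ^ 2 * x) := by
  apply ext2 <;> simp
  ring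

lemma D_conj_V (u : Sˣ) (x : S) : D u * V x * (D u)⁻¹ = V (((u⁻¹ : Sˣ) : S) ^ 2 * x) := by
  apply ext2 <;> simp
  ring

lemma W_conj_U (x : S) : W S * U x * (W S)⁻¹ = V (-x) := by
  apply ext2 <;> simp

lemma W_conj_V (x : S) : W S * V x * (W S)⁻¹ = U (-x) := by
  apply ext2 <;> simp

/-- The group generated by the elementary matrices with off-diagonal entry in `kS`. -/
def E (S : Type*) [CommRing S] (k : ℕ) : Subgroup (SL2 S) :=
  Subgroup.closure ({g | ∃ x : S, g = U (k * x)} ∪ {g | ∃ x : S, g = V (k * x)})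

/-- The principal congruence subgroup of level `k`. -/
def L (S : Type*) [CommRing S] (k : ℕ) : Subgroup (SL2 S) :=
  (Matrix.SpecialLinearGroup.map (n := Fin 2) (Ideal.Quotient.mk (Ideal.span {(k : S)}))).ker

lemma mem_L {k : ℕ} {g : SL2 S} : g ∈ L S k ↔
    (k : S) ∣ g 0 0 - 1 ∧ (k : S) ∣ g 0 1 ∧ (k : S) ∣ g 1 0 ∧ (k : S) ∣ g 1 1 - 1 := by
  have key (x y : S) : (k : S) ∣ x - y ↔ Ideal.Quotient.mk (Ideal.span {(k : S)}) x =
      Ideal.Quotient.mk (Ideal.span {(k : S)}) y := by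
    rw [Ideal.Quotient.eq, Ideal.mem_span_singleton]
  rw [L, MonoidHom.mem_ker]
  constructor
  · intro h
    have hh (i j : Fin 2) := congrArg (fun m => m i j) h
    have k00 := hh 0 0
    have k01 := hh 0 1
    have k10 := hh 1 0
    have k11 := hh 1 1
    simp only [Matrix.SpecialLinearGroup.map_apply_coe, RingHom.mapMatrix_apply, Matrix.map_apply,
      one_00, one_01, one_10, one_11] at k00 k01 k10 k11
    refine ⟨?_, ?_, ?_, ?_⟩
    · rw [key, k00, map_one]
    · rw [← sub_zero (g 0 1), key, k01, map_zero]
    · rw [← sub_zero (g 1 0), key, k10, map_zero]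
    · rw [key, k11, map_one]
  · rintro ⟨h1, h2, h3, h4⟩
    rw [← sub_zero (g 0 1)] at h2
    rw [← sub_zero (g 1 0)] at h3
    rw [key] at h1 h2 h3 h4
    apply ext2 <;> simp [h1, h2, h3, h4]

instance L_normal (k : ℕ) : (L S k).Normal := by unfold L; infer_instance

lemma L_anti {k l : ℕ} (h : k ∣ l) : L S l ≤ L S k := by
  have h' : (k : S) ∣ l := by exact_mod_cast Nat.cast_dvd_cast h
  intro g hg
  rw [mem_L] at hg ⊢
  exact ⟨h'.trans hg.1, h'.trans hg.2.1, h'.trans hg.2.2.1, h'.trans hg.2.2.2⟩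

lemma U_mem_E {k : ℕ} {x : S} (h : (k : S) ∣ x) : U x ∈ E S k := by
  obtain ⟨y, rfl⟩ := h
  exact Subgroup.subset_closure (Or.inl ⟨y, rfl⟩)

lemma V_mem_E {k : ℕ} {x : S} (h : (k : S) ∣ x) : V x ∈ E S k := by
  obtain ⟨y, rfl⟩ := h
  exact Subgroup.subset_closure (Or.inr ⟨y, rfl⟩)

lemma U_mem_L {k : ℕ} {x : S} (h : (k : S) ∣ x) : U x ∈ L S k := by
  rw [mem_L]; simp [h]

lemma V_mem_L {k : ℕ} {x : S} (h : (k : S) ∣ x) : V x ∈ L S k := by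
  rw [mem_L]; simp [h]

lemma E_le_iff {k : ℕ} {H : Subgroup (SL2 S)} :
    E S k ≤ H ↔ ∀ x : S, U (k * x) ∈ H ∧ V (k * x) ∈ H := by
  rw [E, Subgroup.closure_le]
  constructor
  · exact fun h x => ⟨h (Or.inl ⟨x, rfl⟩), h (Or.inr ⟨x, rfl⟩)⟩
  · rintro h g (⟨x, rfl⟩ | ⟨x, rfl⟩)
    exacts [(h x).1, (h x).2]

lemma E_le_L (k : ℕ) : E S k ≤ L S k :=
  E_le_iff.2 fun _ => ⟨U_mem_L (dvd_mul_right _ _), V_mem_L (dvd_mul_right _ _)⟩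

lemma E_anti {k l : ℕ} (h : k ∣ l) : E S l ≤ E S k := by
  have h' : (k : S) ∣ l := by exact_mod_cast Nat.cast_dvd_cast h
  exact E_le_iff.2 fun _ => ⟨U_mem_E (h'.mul_right _), V_mem_E (h'.mul_right _)⟩

/-- Diagonal matrices of units congruent to `1` modulo `k²` are products of four elementary matrices
of level `k`. -/
lemma D_mem_E {k : ℕ} {u : Sˣ} (h : ((k ^ 2 : ℕ) : S) ∣ u - 1) : D u ∈ E S k := by
  obtain ⟨z, hz⟩ := h
  push_cast at hz
  have hu : (u : S) = 1 + k ^ 2 * z := by linear_combination hz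
  have e : D u = V (k * (-z * ((u⁻¹ : Sˣ) : S))) * U ((k : S) * 1) * V (k * z) *
      U (k * (-((u⁻¹ : Sˣ) : S))) := by
    have h1 : (u : S) * ((u⁻¹ : Sˣ) : S) = 1 := u.mul_inv
    rw [hu] at h1
    apply ext2 <;> simp [hu]
    · ring
    · linear_combination k * h1
    · linear_combination k * z * h1
    · linear_combination (1 - k ^ 2 * z * ((u⁻¹ : Sˣ) : S)) * h1
  rw [e]
  exact mul_mem (mul_mem (mul_mem (V_mem_E (dvd_mul_right _ _)) (U_mem_E (dvd_mul_right _ _)))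
    (V_mem_E (dvd_mul_right _ _))) (U_mem_E (dvd_mul_right _ _))

/-- Conjugation carries `E S k` into `H` as soon as it does so for the generators. -/
lemma conj_E_le {G : Type*} [Group G] (f : SL2 S →* G) {k : ℕ} {s : G} {H : Subgroup G}
    (h : ∀ x : S, s * f (U (k * x)) * s⁻¹ ∈ H ∧ s * f (V (k * x)) * s⁻¹ ∈ H) {e : SL2 S}
    (he : e ∈ E S k) : s * f e * s⁻¹ ∈ H := by
  have : E S k ≤ H.comap ((MulAut.conj s).toMonoidHom.comp f) :=
    E_le_iff.2 fun x => by simpa [Subgroup.mem_comap] using h x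
  simpa [Subgroup.mem_comap] using this he

lemma D_conj_mem_E (u : Sˣ) {k : ℕ} {e : SL2 S} (he : e ∈ E S k) :
    D u * e * (D u)⁻¹ ∈ E S k := by
  refine conj_E_le (MonoidHom.id _) (fun x => ?_) he
  simp only [MonoidHom.id_apply, D_conj_U, D_conj_V]
  exact ⟨U_mem_E ⟨(u : S) ^ 2 * x, by ring⟩, V_mem_E ⟨((u⁻¹ : Sˣ) : S) ^ 2 * x, by ring⟩⟩

/-- Matrices with the same first row differ by a lower unipotent on the left. -/
lemma same_row {g h : SL2 S} (h0 : g 0 0 = h 0 0) (h1 : g 0 1 = h 0 1) :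
    g = V ((g * h⁻¹) 1 0) * h := by
  have hg := det_eq g
  have hh := det_eq h
  apply ext2 <;> simp [h0, h1]
  · rw [h0, h1] at hg
    linear_combination (-g 1 0) * hh + h 1 0 * hg
  · rw [h0, h1] at hg
    linear_combination (-g 1 1) * hh + h 1 1 * hg

lemma same_row_L {k : ℕ} {g h : SL2 S} (hg : g ∈ L S k) (hh : h ∈ L S k)
    (h0 : g 0 0 = h 0 0) (h1 : g 0 1 = h 0 1) : ∃ s : S, g = V (k * s) * h := by
  have := (mem_L.1 (mul_mem hg (inv_mem hh))).2.2.1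
  obtain ⟨s, hs⟩ := this
  exact ⟨s, by rw [← hs]; exact same_row h0 h1⟩

end Generic

/-! ### Units, denominators and an interpolation identity -/

section Field

/-- Over a field, `SL₂` is generated by the unipotents `U x` and `V x`. -/
lemma sl2_induction {F : Type*} [Field F] {P : SL2 F → Prop} (hU : ∀ x, P (U x))
    (hV : ∀ x, P (V x)) (hm : ∀ g h, P g → P h → P (g * h)) (g : SL2 F) : P g := by
  have key : ∀ g : SL2 F, g 1 0 ≠ 0 → P g := by
    intro g hg
    have hd := det_eq g
    have : g = U ((g 0 0 - 1) / g 1 0) * V (g 1 0) * U ((g 1 1 - 1) / g 1 0) := by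
      apply ext2 <;> simp <;> field_simp
      · ring
      · linear_combination -hd
      · ring
    rw [this]
    exact hm _ _ (hm _ _ (hU _) (hV _)) (hU _)
  by_cases hg : g 1 0 = 0
  · have hd := det_eq g
    have : g = (g * V 1) * V (-1) := by
      apply ext2 <;> simp
    rw [this]
    refine hm _ _ (key _ ?_) (hV _)
    simp only [mul_ij, V_00, V_10, hg]
    intro h
    rw [hg] at hd
    have : g 1 1 = 0 := by simpa using h
    rw [this] at hd
    simp at hd
  · exact key g hg

/-- If a rational subspace contains `1 / (η + n)` for all natural numbers `n`, it contains `1`: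
this is Lagrange interpolation of `∏ (X + n_i) - minpoly η`. -/
lemma one_mem_of_inv_mem {K : Type*} [Field K] [NumberField K] (W : Submodule ℚ K) (η : K)
    (h : ∀ n : ℕ, η + n ≠ 0 → (η + n)⁻¹ ∈ W) : (1 : K) ∈ W := by
  obtain ⟨N, hN⟩ : ∃ N : ℕ, ∀ n : ℕ, N ≤ n → η + n ≠ 0 := by
    by_cases h0 : ∃ n0 : ℕ, η + n0 = 0
    · obtain ⟨n0, h0⟩ := h0
      refine ⟨n0 + 1, fun n hn h1 => ?_⟩
      have : (n : K) = n0 := by linear_combination h1 - h0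
      have : n = n0 := by exact_mod_cast this
      omega
    · push Not at h0
      exact ⟨0, fun n _ => h0 n⟩
  have hinteg : IsIntegral ℚ η := Algebra.IsIntegral.isIntegral η
  set f := minpoly ℚ η with hf
  set m := f.natDegree with hm
  let v : ℕ → ℚ := fun i => -((N + i : ℕ) : ℚ)
  let s := Finset.range m
  have hinj : Set.InjOn v s := by
    intro a _ b _ hab
    simp only [v, neg_inj] at hab
    have : N + a = N + b := by exact_mod_cast hab
    omega
  let Q : Polynomial ℚ := Lagrange.nodal s v
  have hdeg : (Q - f).degree < s.card := by
    have h1 : Q.degree = m := by simp [Q, s, Lagrange.degree_nodal]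
    have h2 : f.degree = m := Polynomial.degree_eq_natDegree (minpoly.ne_zero hinteg)
    have h3 : Q.degree = f.degree := by rw [h1, h2]
    have := Polynomial.degree_sub_lt_left h3 (Lagrange.nodal_monic.ne_zero)
      (by rw [Lagrange.nodal_monic.leadingCoeff, (minpoly.monic hinteg).leadingCoeff])
    rw [h1] at this
    simpa [s] using this
  have heq := Lagrange.eq_interpolate hinj hdeg
  have hev := congrArg (Polynomial.aeval η) heq
  rw [map_sub, hf, minpoly.aeval, sub_zero, Lagrange.interpolate_apply, map_sum] at hev
  have hQ : Polynomial.aeval η Q = ∏ i ∈ s, (η + ((N + i : ℕ) : K)) := by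
    simp [Q, Lagrange.nodal, map_prod, v]
    refine Finset.prod_congr rfl fun i _ => by ring
  have hne : ∀ i : ℕ, η + ((N + i : ℕ) : K) ≠ 0 := fun i => hN _ (by omega)
  have hprod : ∏ i ∈ s, (η + ((N + i : ℕ) : K)) ≠ 0 :=
    Finset.prod_ne_zero_iff.2 fun i _ => hne i
  rw [hQ] at hev
  have : (1 : K) = (∏ i ∈ s, (η + ((N + i : ℕ) : K)))⁻¹ * ∏ i ∈ s, (η + ((N + i : ℕ) : K)) := by
    rw [inv_mul_cancel₀ hprod]
  rw [this]
  nth_rewrite 2 [hev]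
  rw [Finset.mul_sum]
  refine Submodule.sum_mem _ fun i hi => ?_
  have hb : (Polynomial.aeval η) (Lagrange.basis s v i) =
      algebraMap ℚ K (∏ j ∈ s.erase i, (v i - v j)⁻¹) *
        ∏ j ∈ s.erase i, (η + ((N + j : ℕ) : K)) := by
    rw [Lagrange.basis, map_prod, map_prod, ← Finset.prod_mul_distrib]
    refine Finset.prod_congr rfl fun j _ => ?_
    simp [Lagrange.basisDivisor, v]
    ring_nf
    simp
  have he : (∏ i ∈ s, (η + ((N + i : ℕ) : K)))⁻¹ *
      (Polynomial.aeval η) (Polynomial.C (Polynomial.eval (v i) (Q - f)) * Lagrange.basis s v i) =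
      (Polynomial.eval (v i) (Q - f) * ∏ j ∈ s.erase i, (v i - v j)⁻¹) •
        (η + ((N + i : ℕ) : K))⁻¹ := by
    rw [map_mul, hb, Polynomial.aeval_C, Algebra.smul_def, map_mul, ← Finset.mul_prod_erase s _ hi]
    have h1 := hne i
    have h2 : ∏ j ∈ s.erase i, (η + ((N + j : ℕ) : K)) ≠ 0 :=
      Finset.prod_ne_zero_iff.2 fun i _ => hne i
    generalize ∏ j ∈ s.erase i, (η + ((N + j : ℕ) : K)) = p at h2 ⊢
    field_simp
  rw [he]
  exact W.smul_mem _ (h _ (hne i))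

end Field

section NF

variable (K : Type*) [Field K] [NumberField K]

/-- Dirichlet's unit theorem provides a unit of infinite order. -/
lemma exists_unit (hK : 1 < Fintype.card (InfinitePlace K)) :
    ∃ w : (𝓞 K)ˣ, ∀ n : ℕ, 0 < n → w ^ n ≠ 1 := by
  by_contra! h
  have hr : NumberField.Units.rank K ≠ 0 := by
    unfold NumberField.Units.rank
    omega
  let i : Fin (NumberField.Units.rank K) := ⟨0, Nat.pos_of_ne_zero hr⟩
  obtain ⟨n, hn, hn'⟩ := h (NumberField.Units.fundSystem K i)
  have htor : NumberField.Units.fundSystem K i ∈ NumberField.Units.torsion K := by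
    rw [NumberField.Units.torsion, CommGroup.mem_torsion, isOfFinOrder_iff_pow_eq_one]
    exact ⟨n, hn, hn'⟩
  have h0 := NumberField.Units.logEmbedding_fundSystem K i
  rw [NumberField.Units.dirichletUnitTheorem.logEmbedding_eq_zero_iff.2 htor] at h0
  exact (NumberField.Units.basisUnitLattice K).ne_zero i (Subtype.ext h0.symm)

variable {K}

lemma exists_pow_sub_one {x b : 𝓞 K} (hb : b ≠ 0) (h : IsCoprime x b) :
    ∃ j : ℕ, 0 < j ∧ b ∣ x ^ j - 1 := by
  have : Finite (𝓞 K ⧸ Ideal.span {b}) :=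
    Ideal.finiteQuotientOfFreeOfNeBot _ (by simpa using hb)
  have hu : IsUnit (Ideal.Quotient.mk (Ideal.span {b}) x) := by
    obtain ⟨s, t, hst⟩ := h
    refine IsUnit.of_mul_eq_one (Ideal.Quotient.mk _ s) ?_
    rw [← map_mul, ← map_one (Ideal.Quotient.mk (Ideal.span {b})), Ideal.Quotient.eq,
      Ideal.mem_span_singleton]
    exact ⟨-t, by linear_combination hst⟩
  obtain ⟨u, hu⟩ := hu
  obtain ⟨j, hj, hj'⟩ := isOfFinOrder_iff_pow_eq_one.1 (isOfFinOrder_of_finite u)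
  refine ⟨j, hj, ?_⟩
  rw [← Ideal.mem_span_singleton, ← Ideal.Quotient.eq, map_pow, ← hu, ← Units.val_pow_eq_pow_val,
    hj', Units.val_one, map_one]

lemma exists_unit_pow (w : (𝓞 K)ˣ) {N : ℕ} (hN : 1 ≤ N) :
    ∃ j : ℕ, 0 < j ∧ (N : 𝓞 K) ∣ ((w ^ j : (𝓞 K)ˣ) : 𝓞 K) - 1 := by
  obtain ⟨j, hj, h⟩ := exists_pow_sub_one (x := (w : 𝓞 K)) (b := (N : 𝓞 K))
    (by exact_mod_cast (by omega : N ≠ 0)) (isCoprime_one_left.of_isCoprime_of_dvd_left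
      (isUnit_iff_dvd_one.1 w.isUnit))
  exact ⟨j, hj, by simpa using h⟩

lemma exists_den (x : K) : ∃ N : ℕ, 1 ≤ N ∧ ∃ r : 𝓞 K, (N : K) * x = algebraMap (𝓞 K) K r := by
  have hx : IsAlgebraic ℤ x :=
    (IsFractionRing.isAlgebraic_iff ℤ ℚ K).2 (Algebra.IsAlgebraic.isAlgebraic x)
  obtain ⟨y, hy, h⟩ := hx.exists_integral_multiple
  have h' : IsIntegral ℤ ((y.natAbs : K) * x) := by
    rcases Int.natAbs_eq y with e | e
    · rw [e] at h
      simpa [zsmul_eq_mul] using h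
    · rw [e] at h
      simpa [zsmul_eq_mul] using h.neg
  exact ⟨y.natAbs, Int.natAbs_pos.2 hy, ⟨_, h'⟩, rfl⟩

end NF

/-! ### Conjugation by elements of SL₂(K) -/

section NF3

set_option linter.unusedSectionVars false

variable {K : Type*} [Field K] [NumberField K]

local notation "ι" => algebraMap (𝓞 K) K

/-- The inclusion of `SL₂(𝓞 K)` in `SL₂(K)`. -/
noncomputable def inc (K : Type*) [Field K] [NumberField K] : SL2 (𝓞 K) →* SL2 K :=
  Matrix.SpecialLinearGroup.map (algebraMap (𝓞 K) K)

@[simp] lemma inc_ij (g : SL2 (𝓞 K)) (i j : Fin 2) : (inc K g) i j = ι (g i j) := rfl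

lemma inc_U (x : 𝓞 K) : inc K (U x) = U (ι x) := by apply ext2 <;> simp

lemma inc_V (x : 𝓞 K) : inc K (V x) = V (ι x) := by apply ext2 <;> simp

lemma inc_W : inc K (W (𝓞 K)) = W K := by apply ext2 <;> simp

lemma inc_injective : Function.Injective (inc K) := by
  intro g h e
  have := fun i j => congrArg (fun m => m i j) e
  simp only [inc_ij] at this
  apply ext2 <;> exact RingOfIntegers.coe_injective (this _ _)

/-- The image of `E (𝓞 K) k` in `SL₂(K)`. -/
noncomputable def EK (K : Type*) [Field K] [NumberField K] (k : ℕ) : Subgroup (SL2 K) :=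
  (E (𝓞 K) k).map (inc K)

/-- The image of the principal congruence subgroup of level `k` in `SL₂(K)`. -/
noncomputable def LK (K : Type*) [Field K] [NumberField K] (k : ℕ) : Subgroup (SL2 K) :=
  (L (𝓞 K) k).map (inc K)

lemma inc_mem_EK {k : ℕ} {g : SL2 (𝓞 K)} : inc K g ∈ EK K k ↔ g ∈ E (𝓞 K) k :=
  Subgroup.mem_map_iff_mem inc_injective

lemma inc_mem_LK {k : ℕ} {g : SL2 (𝓞 K)} : inc K g ∈ LK K k ↔ g ∈ L (𝓞 K) k :=
  Subgroup.mem_map_iff_mem inc_injective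

lemma EK_anti {k l : ℕ} (h : k ∣ l) : EK K l ≤ EK K k := Subgroup.map_mono (E_anti h)

lemma LK_anti {k l : ℕ} (h : k ∣ l) : LK K l ≤ LK K k := Subgroup.map_mono (L_anti h)

lemma EK_le_LK (k : ℕ) : EK K k ≤ LK K k := Subgroup.map_mono (E_le_L k)

lemma U_mem_EK {k : ℕ} {x : K} (r : 𝓞 K) (h : x = k * ι r) : U x ∈ EK K k := by
  have : U x = inc K (U (k * r)) := by rw [inc_U, h]; simp
  rw [this, inc_mem_EK]
  exact U_mem_E (dvd_mul_right _ _)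

lemma V_mem_EK {k : ℕ} {x : K} (r : 𝓞 K) (h : x = k * ι r) : V x ∈ EK K k := by
  have : V x = inc K (V (k * r)) := by rw [inc_V, h]; simp
  rw [this, inc_mem_EK]
  exact V_mem_E (dvd_mul_right _ _)

lemma mem_LK {k : ℕ} {g : SL2 K} : g ∈ LK K k ↔ ∃ a b c d : 𝓞 K,
    g 0 0 = 1 + k * (ι a) ∧ g 0 1 = k * (ι b) ∧ g 1 0 = k * (ι c) ∧
      g 1 1 = 1 + k * (ι d) := by
  constructor
  · rintro ⟨g, hg, rfl⟩
    obtain ⟨⟨a, ha⟩, ⟨b, hb⟩, ⟨c, hc⟩, ⟨d, hd⟩⟩ := mem_L.1 hg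
    refine ⟨a, b, c, d, ?_, ?_, ?_, ?_⟩
    · simp [eq_add_of_sub_eq' ha]
    · simp [hb]
    · simp [hc]
    · simp [eq_add_of_sub_eq' hd]
  · rintro ⟨a, b, c, d, ha, hb, hc, hd⟩
    refine ⟨mk (1 + k * a) (k * b) (k * c) (1 + k * d) ?_, ?_, ?_⟩
    · have := det_eq g
      rw [ha, hb, hc, hd] at this
      apply RingOfIntegers.coe_injective
      simpa using this
    · exact mem_L.2 (by simp)
    · apply ext2 <;> simp [ha, hb, hc, hd]

lemma W_conj_mem_EK {k : ℕ} {g : SL2 K} (h : g ∈ EK K k) : W K * g * (W K)⁻¹ ∈ EK K k := by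
  obtain ⟨e, he, rfl⟩ := h
  refine conj_E_le (inc K) (fun x => ?_) he
  rw [inc_U, inc_V, W_conj_U, W_conj_V]
  exact ⟨V_mem_EK (-x) (by simp), U_mem_EK (-x) (by simp)⟩

lemma W_inv_conj_mem_EK {k : ℕ} {g : SL2 K} (h : g ∈ EK K k) :
    (W K)⁻¹ * g * (W K)⁻¹⁻¹ ∈ EK K k := by
  have e : (W K)⁻¹ * g * (W K)⁻¹⁻¹ = W K * (W K * (W K * g * (W K)⁻¹) * (W K)⁻¹) * (W K)⁻¹ := by
    apply ext2 <;> simp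
  rw [e]
  exact W_conj_mem_EK (W_conj_mem_EK (W_conj_mem_EK h))

lemma V_eq_W {K : Type*} [Field K] (x : K) : V x = W K * U (-x) * (W K)⁻¹ := by
  rw [W_conj_U, neg_neg]

/-- Conjugation by an element of `SL₂(K)` is continuous for the congruence topology. -/
lemma LK_conj (s : SL2 K) : ∀ k : ℕ, 1 ≤ k → ∃ k' : ℕ, 1 ≤ k' ∧
    ∀ g ∈ LK K k', s * g * s⁻¹ ∈ LK K k := by
  have hU : ∀ x : K, ∀ k : ℕ, 1 ≤ k → ∃ k' : ℕ, 1 ≤ k' ∧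
      ∀ g ∈ LK K k', U x * g * (U x)⁻¹ ∈ LK K k := by
    intro x k hk
    obtain ⟨N, hN, r, hr⟩ := exists_den x
    refine ⟨k * N ^ 2, Nat.mul_pos hk (Nat.pow_pos hN), fun g hg => ?_⟩
    obtain ⟨a, b, c, d, ha, hb, hc, hd⟩ := mem_LK.1 hg
    rw [mem_LK]
    refine ⟨N ^ 2 * a + N * r * c, N ^ 2 * b + N * r * (d - a) - r ^ 2 * c, N ^ 2 * c,
      N ^ 2 * d - N * r * c, ?_, ?_, ?_, ?_⟩ <;>
    · simp [ha, hb, hc, hd, ← hr]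
      ring
  refine sl2_induction (P := fun s => ∀ k : ℕ, 1 ≤ k → ∃ k' : ℕ, 1 ≤ k' ∧
    ∀ g ∈ LK K k', s * g * s⁻¹ ∈ LK K k) hU ?_ ?_ s
  · intro x k hk
    obtain ⟨k', hk', h⟩ := hU (-x) k hk
    have hW : ∀ k : ℕ, ∀ g ∈ LK K k, W K * g * (W K)⁻¹ ∈ LK K k := by
      intro k g hg
      rw [mem_LK] at hg ⊢
      obtain ⟨a, b, c, d, ha, hb, hc, hd⟩ := hg
      exact ⟨d, -c, -b, a, by simp [hd], by simp [hc], by simp [hb], by simp [ha]⟩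
    have hW' : ∀ k : ℕ, ∀ g ∈ LK K k, (W K)⁻¹ * g * (W K) ∈ LK K k := by
      intro k g hg
      rw [mem_LK] at hg ⊢
      obtain ⟨a, b, c, d, ha, hb, hc, hd⟩ := hg
      exact ⟨d, -c, -b, a, by simp [hd], by simp [hc], by simp [hb], by simp [ha]⟩
    refine ⟨k', hk', fun g hg => ?_⟩
    have := hW _ _ (h _ (hW' _ _ hg))
    rw [V_eq_W]
    convert this using 1
    group
  · intro s t hs ht k hk
    obtain ⟨k1, hk1, h1⟩ := hs k hk
    obtain ⟨k2, hk2, h2⟩ := ht k1 hk1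
    refine ⟨k2, hk2, fun g hg => ?_⟩
    convert h1 _ (h2 _ hg) using 1
    group

/-- A unit of `𝓞 K`, as a unit of `K`. -/
noncomputable def unitK (u : (𝓞 K)ˣ) : Kˣ := Units.map (algebraMap (𝓞 K) K).toMonoidHom u

@[simp] lemma unitK_val (u : (𝓞 K)ˣ) : ((unitK u : Kˣ) : K) = (ι u) := rfl

@[simp] lemma unitK_inv_val (u : (𝓞 K)ˣ) :
    (((unitK u)⁻¹ : Kˣ) : K) = ι (u⁻¹ : (𝓞 K)ˣ) := rfl

lemma inc_D (u : (𝓞 K)ˣ) : inc K (D u) = D (unitK u) := by apply ext2 <;> simp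

/-- The key half of the commensurability of `EK K k` with its conjugates: `U x` conjugates all
sufficiently divisible lower unipotents into `EK K k`. -/
lemma exists_conj_V (hK : 1 < Fintype.card (InfinitePlace K)) (x : K) {k : ℕ} (hk : 1 ≤ k) :
    ∃ k' : ℕ, 1 ≤ k' ∧ ∀ r : 𝓞 K, U x * V ((k' : K) * ι r) * (U x)⁻¹ ∈ EK K k := by
  obtain ⟨w, hw⟩ := exists_unit K hK
  have hk0 : (k : K) ≠ 0 := by exact_mod_cast (by omega : k ≠ 0)
  -- `M` consists of the admissible lower unipotents, `Y` is its rational span, and `A` the ring of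
  -- multipliers of `Y`, which is a field; the aim is `Y = K`
  let M : AddSubgroup K :=
    { carrier := {c | U x * V c * (U x)⁻¹ ∈ EK K k}
      zero_mem' := by simp [V_zero, one_mem]
      add_mem' := by
        intro a b ha hb
        simp only [Set.mem_ofPred_eq] at ha hb ⊢
        convert mul_mem ha hb using 1
        rw [V_add]; group
      neg_mem' := by
        intro a ha
        simp only [Set.mem_ofPred_eq] at ha ⊢
        convert inv_mem ha using 1
        rw [V_neg]; group }
  have memM : ∀ c, c ∈ M ↔ U x * V c * (U x)⁻¹ ∈ EK K k := fun c => Iff.rfl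
  let Y : Submodule ℚ K :=
    { carrier := {z | ∃ N : ℕ, 1 ≤ N ∧ (N : K) * z ∈ M}
      zero_mem' := ⟨1, le_rfl, by simp [M.zero_mem]⟩
      add_mem' := by
        rintro a b ⟨N, hN, ha⟩ ⟨N', hN', hb⟩
        refine ⟨N * N', Nat.mul_pos hN hN', ?_⟩
        have := M.add_mem (M.nsmul_mem ha N') (M.nsmul_mem hb N)
        convert this using 1
        simp only [nsmul_eq_mul]; push_cast; ring
      smul_mem' := by
        rintro q z ⟨N, hN, h⟩
        refine ⟨q.den * N, Nat.mul_pos q.den_pos hN, ?_⟩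
        have := M.zsmul_mem h q.num
        convert this using 1
        rw [zsmul_eq_mul, Algebra.smul_def]
        have hq : (algebraMap ℚ K q) * (q.den : K) = (q.num : K) := by
          have := congrArg (algebraMap ℚ K) (Rat.mul_den_eq_num q)
          rwa [map_mul, map_natCast, map_intCast] at this
        push_cast
        linear_combination (N : K) * z * hq }
  have memY : ∀ z, z ∈ Y ↔ ∃ N : ℕ, 1 ≤ N ∧ (N : K) * z ∈ M := fun c => Iff.rfl
  have MY : ∀ z ∈ M, z ∈ Y := fun z hz => (memY z).2 ⟨1, le_rfl, by simpa using hz⟩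
  let A : Subalgebra ℚ K :=
    { carrier := {f | ∀ z ∈ Y, f * z ∈ Y}
      mul_mem' := by
        intro a b ha hb z hz
        rw [mul_assoc]
        exact ha _ (hb _ hz)
      add_mem' := by
        intro a b ha hb z hz
        rw [add_mul]
        exact Y.add_mem (ha _ hz) (hb _ hz)
      algebraMap_mem' := by
        intro q z hz
        rw [← Algebra.smul_def]
        exact Y.smul_mem _ hz }
  have memA : ∀ f, f ∈ A ↔ ∀ z ∈ Y, f * z ∈ Y := fun c => Iff.rfl
  have Ainv : ∀ f ∈ A, f⁻¹ ∈ A := fun f hf =>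
    Subalgebra.inv_mem_of_algebraic (A := A) (x := ⟨f, hf⟩) (Algebra.IsAlgebraic.isAlgebraic f)
  -- the inverse of every nonzero element of the coset `x + k𝓞` lies in the rational span of `M`
  have hinv : ∀ r : 𝓞 K, x + k * ι r ≠ 0 → (x + k * ι r)⁻¹ ∈ Y := by
    intro r hy
    set y := x + k * ι r with hydef
    obtain ⟨N1, hN1, r1, hr1⟩ := exists_den x
    obtain ⟨N2, hN2, r2, hr2⟩ := exists_den y
    obtain ⟨N3, hN3, r3, hr3⟩ := exists_den y⁻¹
    have hN : 1 ≤ k ^ 2 * N1 * N2 * N3 :=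
      Nat.mul_pos (Nat.mul_pos (Nat.mul_pos (Nat.pow_pos hk) hN1) hN2) hN3
    obtain ⟨j, hj, t, ht⟩ := exists_unit_pow w⁻¹ hN
    set v := w⁻¹ ^ j with hv
    have htK : (ι v) - 1 = (k : K) ^ 2 * N1 * N2 * N3 * ι t := by
      have := congrArg (algebraMap (𝓞 K) K) ht
      simpa using this
    -- multiplication by `v²` preserves `M`
    have hv2 : (ι v) ^ 2 ∈ A := by
      have hM : ∀ c ∈ M, (ι v) ^ 2 * c ∈ M := by
        intro c hc
        rw [memM] at hc ⊢
        obtain ⟨e, he, hee⟩ := hc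
        have h1 : inc K (D v⁻¹ * e * (D v⁻¹)⁻¹) ∈ EK K k :=
          inc_mem_EK.2 (D_conj_mem_E v⁻¹ he)
        set vi : 𝓞 K := ((v⁻¹ : (𝓞 K)ˣ) : 𝓞 K) with hvi
        have hvv : (v : 𝓞 K) * vi = 1 := v.mul_inv
        have hvvK : (ι v) * (ι vi) = 1 := by
          rw [← map_mul, hvv, map_one]
        have h2 : U ((1 - (ι vi) ^ 2) * x) ∈ EK K k := by
          refine U_mem_EK (t * (v + 1) * k * N2 * N3 * r1 * vi ^ 2) ?_
          simp only [map_mul, map_add, map_pow, map_natCast, map_one]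
          rw [← hr1]
          linear_combination ((ι v) + 1) * x * (ι vi) ^ 2 * htK
            - x * ((ι v) * ι vi + 1) * hvvK
        rw [map_mul, map_mul, hee, map_inv, inc_D] at h1
        have h3 := mul_mem (mul_mem h2 h1) (inv_mem h2)
        convert h3 using 1
        have hD : D (unitK v⁻¹) * (U x * V c * (U x)⁻¹) * (D (unitK v⁻¹))⁻¹ =
            U ((ι vi) ^ 2 * x) * V ((ι v) ^ 2 * c) * (U ((ι vi) ^ 2 * x))⁻¹ := by
          have e1 := D_conj_U (unitK v⁻¹) x
          have e2 := D_conj_V (unitK v⁻¹) c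
          rw [unitK_val] at e1
          rw [unitK_inv_val, inv_inv] at e2
          rw [← e1, ← e2]
          group
        have hx : x = (1 - (ι vi) ^ 2) * x + (ι vi) ^ 2 * x := by ring
        rw [hD]
        nth_rewrite 1 2 [hx]
        rw [U_add]
        group
      rw [memA]
      intro z hz
      obtain ⟨N, hN, h⟩ := (memY z).1 hz
      refine (memY _).2 ⟨N, hN, ?_⟩
      convert hM _ h using 1
      ring
    set u : (𝓞 K)ˣ := v ^ 2 with hu
    have hu1 : (ι u) ≠ 1 := by
      intro h
      have h1 : (u : 𝓞 K) = 1 := RingOfIntegers.coe_injective (by rw [h, map_one])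
      have h2 : u = 1 := Units.ext h1
      rw [hu, hv, ← pow_mul, inv_pow, inv_eq_one] at h2
      exact hw _ (by omega) h2
    have huA : ((ι u) - 1)⁻¹ ∈ A := by
      refine Ainv _ (sub_mem ?_ (one_mem A))
      simpa [hu] using hv2
    -- the conjugate `U y * V ((u - 1) / y) * U (-y)` factors through a diagonal matrix
    have hc : ((ι u) - 1) * y⁻¹ ∈ M := by
      set ui : 𝓞 K := ((u⁻¹ : (𝓞 K)ˣ) : 𝓞 K) with hui
      have huu : (u : 𝓞 K) * ui = 1 := u.mul_inv
      have huuK : (ι u) * (ι ui) = 1 := by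
        rw [← map_mul, huu, map_one]
      have huv : (ι u) - 1 = ((ι v) + 1) * ((ι v) - 1) := by
        simp [hu]; ring
      have huD : D u ∈ E (𝓞 K) k := by
        refine D_mem_E ⟨(v + 1) * (N1 * N2 * N3 * t), ?_⟩
        simp only [hu, Units.val_pow_eq_pow_val]
        push_cast at ht ⊢
        linear_combination ((v : 𝓞 K) + 1) * ht
      have hV : V (((ι u) - 1) * y⁻¹ * ι ui) ∈ EK K k := by
        refine V_mem_EK (ui * (v + 1) * k * N1 * N2 * r3 * t) ?_
        simp only [map_mul, map_add, map_natCast, map_one]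
        rw [← hr3, huv]
        linear_combination (ι ui) * ((ι v) + 1) * y⁻¹ * htK
      have hU : U (-(((ι u) - 1) * y * ι ui)) ∈ EK K k := by
        refine U_mem_EK (-(ui * (v + 1) * k * N1 * r2 * N3 * t)) ?_
        simp only [map_mul, map_add, map_natCast, map_one, map_neg]
        rw [← hr2, huv]
        linear_combination - (ι ui) * ((ι v) + 1) * y * htK
      have hU2 : U ((k : K) * ι r) ∈ EK K k := U_mem_EK r rfl
      have hD : inc K (D u) ∈ EK K k := inc_mem_EK.2 huD
      have hP := mul_mem (mul_mem (inv_mem hU2) (mul_mem (mul_mem hV hD) hU)) hU2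
      rw [memM]
      convert hP using 1
      have e1 : V (((ι u) - 1) * y⁻¹ * ι ui) * inc K (D u) *
          U (-(((ι u) - 1) * y * ι ui)) =
          U y * V (((ι u) - 1) * y⁻¹) * (U y)⁻¹ := by
        rw [inc_D]
        have hyy : y⁻¹ * y = 1 := inv_mul_cancel₀ hy
        generalize y⁻¹ = yi at hyy
        clear_value y ui
        apply ext2 <;> simp
        · linear_combination (1 - (ι u)) * hyy
        · linear_combination (1 - (ι u)) * y * huuK +
            ((ι u) - 1) * y * hyy
        · linear_combination ((ι u) - 1) * yi * huuK
        · rw [inv_eq_of_mul_eq_one_right huuK]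
          linear_combination (-((ι u) - 1) ^ 2 * ι ui * yi * y + 2 - ι u) * huuK +
            (-((ι u) - 1) ^ 2 * ι ui + (ι u - 1)) * hyy
      rw [e1, hydef, add_comm x, U_add]
      group
    have := huA _ (MY _ hc)
    rwa [← mul_assoc, inv_mul_cancel₀ (sub_ne_zero.2 hu1), one_mul] at this
  have hσ : ∀ σ : 𝓞 K, σ ≠ 0 → (ι σ)⁻¹ ∈ Y := by
    intro σ hs
    have hs' : (ι σ) ≠ 0 := by
      intro h; exact hs (RingOfIntegers.coe_injective (by rw [h, map_zero]))
    have h1 : (1 : K) ∈ Y.comap (LinearMap.mulLeft ℚ ((k : K) * ι σ)⁻¹) := by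
      refine one_mem_of_inv_mem _ (x / (k * ι σ)) fun n hn => ?_
      rw [Submodule.mem_comap, LinearMap.mulLeft_apply]
      have e : x + k * ι (n * σ) = (k * ι σ) * (x / (k * ι σ) + n) := by
        simp only [map_mul, map_natCast]; field_simp
      have := hinv (n * σ) (by rw [e]; exact mul_ne_zero (mul_ne_zero hk0 hs') hn)
      rwa [e, mul_inv] at this
    rw [Submodule.mem_comap, LinearMap.mulLeft_apply, mul_one] at h1
    have := Y.smul_mem (k : ℚ) h1
    rw [Algebra.smul_def, map_natCast, mul_inv, ← mul_assoc, mul_inv_cancel₀ hk0, one_mul] at this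
    exact this
  have htop : ∀ z : K, z ∈ Y := by
    intro z
    by_cases hz : z = 0
    · rw [hz]; exact Y.zero_mem
    obtain ⟨N, hN, r, hr⟩ := exists_den z⁻¹
    have hN0 : (N : K) ≠ 0 := by exact_mod_cast (by omega : N ≠ 0)
    have hr0 : r ≠ 0 := by
      rintro rfl
      rw [map_zero] at hr
      exact mul_ne_zero hN0 (inv_ne_zero hz) hr
    have := Y.smul_mem (N : ℚ) (hσ r hr0)
    rw [Algebra.smul_def, map_natCast, ← hr] at this
    convert this using 1
    field_simp
  let b := RingOfIntegers.basis K
  choose f hf1 hf2 using fun i => (memY _).1 (htop (ι (b i)))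
  refine ⟨∏ i, f i, Nat.one_le_iff_ne_zero.2 (Finset.prod_ne_zero_iff.2 fun i _ => Nat.one_le_iff_ne_zero.1 (hf1 i)), fun r => ?_⟩
  rw [← memM, ← b.sum_repr r, map_sum, Finset.mul_sum]
  refine sum_mem fun i _ => ?_
  rw [← Finset.prod_erase_mul _ _ (Finset.mem_univ i)]
  have := M.zsmul_mem (M.nsmul_mem (hf2 i) (∏ j ∈ Finset.univ.erase i, f j)) (b.repr r i)
  convert this using 1
  rw [zsmul_eq_mul, nsmul_eq_mul, zsmul_eq_mul, map_mul, map_intCast, Nat.cast_mul]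
  ring

/-- Conjugation by an element of `SL₂(K)` is continuous for the topology defined by the groups
`EK K k`. -/
lemma EK_conj (hK : 1 < Fintype.card (InfinitePlace K)) (s : SL2 K) :
    ∀ k : ℕ, 1 ≤ k → ∃ k' : ℕ, 1 ≤ k' ∧ ∀ g ∈ EK K k', s * g * s⁻¹ ∈ EK K k := by
  have hU : ∀ x : K, ∀ k : ℕ, 1 ≤ k → ∃ k' : ℕ, 1 ≤ k' ∧
      ∀ g ∈ EK K k', U x * g * (U x)⁻¹ ∈ EK K k := by
    intro x k hk
    obtain ⟨k', hk', h⟩ := exists_conj_V hK x hk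
    refine ⟨k * k', Nat.mul_pos hk hk', ?_⟩
    rintro g ⟨e, he, rfl⟩
    refine conj_E_le (inc K) (fun r => ?_) he
    rw [inc_U, inc_V]
    constructor
    · have : U x * U (ι ((k * k' : ℕ) * r)) * (U x)⁻¹ =
          U (ι ((k * k' : ℕ) * r)) := by
        rw [← U_add, add_comm, U_add]; group
      rw [this]
      exact U_mem_EK (k' * r) (by simp; ring)
    · have := h (k * r)
      convert this using 4
      simp; ring
  refine sl2_induction (P := fun s => ∀ k : ℕ, 1 ≤ k → ∃ k' : ℕ, 1 ≤ k' ∧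
    ∀ g ∈ EK K k', s * g * s⁻¹ ∈ EK K k) hU ?_ ?_ s
  · intro x k hk
    obtain ⟨k', hk', h⟩ := hU (-x) k hk
    refine ⟨k', hk', fun g hg => ?_⟩
    have := W_conj_mem_EK (h _ (W_inv_conj_mem_EK hg))
    rw [V_eq_W]
    convert this using 1
    group
  · intro s t hs ht k hk
    obtain ⟨k1, hk1, h1⟩ := hs k hk
    obtain ⟨k2, hk2, h2⟩ := ht k1 hk1
    refine ⟨k2, hk2, fun g hg => ?_⟩
    convert h1 _ (h2 _ hg) using 1
    group

end NF3

/-! ### Coprimality, change of level, orders of units modulo primes -/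

section Generic4

variable {S T : Type*} [CommRing S] [CommRing T]

lemma isCoprime_of_forall_maximal {x y : S}
    (h : ∀ P : Ideal S, P.IsMaximal → y ∈ P → x ∉ P) : IsCoprime x y := by
  rw [← Ideal.isCoprime_span_singleton_iff, Ideal.isCoprime_iff_sup_eq]
  by_contra hne
  obtain ⟨P, hP, hle⟩ := Ideal.exists_le_maximal _ hne
  exact h P hP (hle (Ideal.mem_sup_right (Ideal.mem_span_singleton_self y)))
    (hle (Ideal.mem_sup_left (Ideal.mem_span_singleton_self x)))

/-- A matrix with a suitable unit in the upper left corner is elementary: it is a product of the form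
`V * D * U`. -/
lemma mem_E_of_unit {k : ℕ} {g : SL2 S} {u : Sˣ} (hu : g 0 0 = u)
    (h1 : ((k ^ 2 : ℕ) : S) ∣ u - 1) (h01 : (k : S) ∣ g 0 1) (h10 : (k : S) ∣ g 1 0) :
    g ∈ E S k := by
  have hd := det_eq g
  rw [hu] at hd
  have huu : (u : S) * ((u⁻¹ : Sˣ) : S) = 1 := u.mul_inv
  have : g = V (g 1 0 * ((u⁻¹ : Sˣ) : S)) * D u * U (((u⁻¹ : Sˣ) : S) * g 0 1) := by
    apply ext2 <;> simp [hu]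
    linear_combination ((u⁻¹ : Sˣ) : S) * hd - g 1 1 * huu
  rw [this]
  exact mul_mem (mul_mem (V_mem_E (h10.mul_right _)) (D_mem_E h1)) (U_mem_E (h01.mul_left _))

lemma exists_lift_E (f : S →+* T) (hf : Function.Surjective f) {k : ℕ} {e : SL2 T}
    (he : e ∈ E T k) : ∃ e' ∈ E S k, Matrix.SpecialLinearGroup.map f e' = e := by
  have : E T k ≤ (E S k).map (Matrix.SpecialLinearGroup.map f) := by
    refine E_le_iff.2 fun x => ?_
    obtain ⟨y, rfl⟩ := hf x
    exact ⟨⟨U (k * y), U_mem_E (dvd_mul_right _ _), by apply ext2 <;> simp⟩,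
      ⟨V (k * y), V_mem_E (dvd_mul_right _ _), by apply ext2 <;> simp⟩⟩
  exact this he

end Generic4

/-- A number `n` is the product of a part composed of primes dividing `q` and a part coprime to `q`. -/
lemma exists_decomp (n q : ℕ) (hn : 1 ≤ n) :
    ∃ a b j : ℕ, n = a * b ∧ a ∣ q ^ j ∧ b.Coprime q := by
  induction n using Nat.strong_induction_on with
  | _ n ih =>
    by_cases h : n.Coprime q
    · exact ⟨1, n, 0, by simp, by simp, h⟩
    · have hg : 0 < n.gcd q := Nat.gcd_pos_of_pos_left _ hn
      have hg1 : n.gcd q ≠ 1 := h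
      obtain ⟨m, hm⟩ := Nat.gcd_dvd_left n q
      have hm1 : 1 ≤ m := by
        rcases Nat.eq_zero_or_pos m with rfl | h
        · omega
        · exact h
      have hlt : m < n := by
        rw [hm]
        nlinarith [(by omega : 2 ≤ n.gcd q)]
      obtain ⟨a, b, j, h1, h2, h3⟩ := ih m hlt hm1
      refine ⟨n.gcd q * a, b, j + 1, by rw [mul_assoc, ← h1]; exact hm, ?_, h3⟩
      rw [pow_succ']
      exact Nat.mul_dvd_mul (Nat.gcd_dvd_right _ _) h2

section NF4

set_option linter.unusedSectionVars false

variable {K : Type*} [Field K] [NumberField K]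

/-- In a coprime row, the second entry can be made coprime to a given `m` by adding a multiple of the
first. -/
lemma exists_coprime_add {a b m : 𝓞 K} (h : IsCoprime a b) (hm : m ≠ 0) :
    ∃ s : 𝓞 K, IsCoprime (b + a * s) m := by
  classical
  have hfin := Ideal.finite_factors (R := 𝓞 K) (I := Ideal.span {m}) (by simpa using hm)
  let F := hfin.toFinset
  obtain ⟨s, hs⟩ := IsDedekindDomain.exists_forall_sub_mem_ideal (s := F)
    (fun v : IsDedekindDomain.HeightOneSpectrum (𝓞 K) => v.asIdeal) (fun _ => 1)
    (fun v _ => v.prime) (fun v _ w _ hvw h => hvw (IsDedekindDomain.HeightOneSpectrum.ext h))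
    (fun v => if b ∈ v.1.asIdeal then 1 else 0)
  refine ⟨s, isCoprime_of_forall_maximal fun P hP hmP hx => ?_⟩
  have hP0 : P ≠ ⊥ := by
    rintro rfl
    exact hm (by simpa using hmP)
  let v : IsDedekindDomain.HeightOneSpectrum (𝓞 K) := ⟨P, hP.isPrime, hP0⟩
  have hv : v ∈ F := by
    rw [Set.Finite.mem_toFinset]
    exact Ideal.dvd_span_singleton.2 hmP
  have h1 := hs v hv
  rw [pow_one] at h1
  change s - (if b ∈ P then 1 else 0) ∈ P at h1
  by_cases hb : b ∈ P
  · rw [if_pos hb] at h1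
    have ha : a ∈ P := by
      have e : a = (b + a * s) - b - a * (s - 1) := by ring
      rw [e]
      exact P.sub_mem (P.sub_mem hx hb) (P.mul_mem_left _ h1)
    obtain ⟨c, d, hcd⟩ := h
    exact hP.ne_top (P.eq_top_iff_one.2 (hcd ▸ P.add_mem (P.mul_mem_left _ ha)
      (P.mul_mem_left _ hb)))
  · rw [if_neg hb, sub_zero] at h1
    refine hb ?_
    have e : b = (b + a * s) - a * s := by ring
    rw [e]
    exact P.sub_mem hx (P.mul_mem_left _ h1)

/-- Elements of level `k²` can be moved to any level by multiplication by `E (𝓞 K) k`. -/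
lemma exists_mul_mem_L {k n : ℕ} (hn : 1 ≤ n) {g : SL2 (𝓞 K)} (hg : g ∈ L (𝓞 K) (k ^ 2)) :
    ∃ e ∈ E (𝓞 K) k, g * e ∈ L (𝓞 K) n := by
  obtain ⟨⟨a, ha⟩, ⟨b, hb⟩, ⟨c, hc⟩, ⟨d, hd⟩⟩ := mem_L.1 hg
  have hdet := det_eq g
  have hn0 : (n : 𝓞 K) ≠ 0 := by exact_mod_cast (by omega : n ≠ 0)
  have hcop : IsCoprime (g 0 1 * k) (g 0 0) := by
    refine IsCoprime.mul_left ⟨-g 1 0, g 1 1, by linear_combination hdet⟩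
      ⟨-(k * a), 1, ?_⟩
    push_cast at ha
    linear_combination ha
  obtain ⟨t, ht⟩ := exists_coprime_add hcop hn0
  set g' := g * V (k * t) with hg'
  have h00 : g' 0 0 = g 0 0 + g 0 1 * k * t := by simp [hg']; ring
  let π := Ideal.Quotient.mk (Ideal.span {(n : 𝓞 K)})
  have hu : IsUnit (π (g' 0 0)) := by
    obtain ⟨x, y, hxy⟩ := ht
    refine IsUnit.of_mul_eq_one (π x) ?_
    rw [← map_mul, ← map_one π, Ideal.Quotient.eq, Ideal.mem_span_singleton]
    exact ⟨-y, by rw [h00]; linear_combination hxy⟩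
  obtain ⟨u, hu⟩ := hu
  have hπk : ∀ x : 𝓞 K, ∀ j : ℕ, (j : 𝓞 K) ∣ x → ((j : ℕ) : 𝓞 K ⧸ Ideal.span {(n : 𝓞 K)}) ∣ π x := by
    intro x j h
    have := map_dvd π h
    rwa [map_natCast] at this
  have hkk : (k : 𝓞 K) ∣ ((k ^ 2 : ℕ) : 𝓞 K) := ⟨k, by push_cast; ring⟩
  have hmem : Matrix.SpecialLinearGroup.map π g' ∈ E (𝓞 K ⧸ Ideal.span {(n : 𝓞 K)}) k := by
    refine mem_E_of_unit (u := u) ?_ ?_ ?_ ?_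
    · simp [hu]
    · rw [hu, ← map_one π, ← map_sub]
      refine hπk _ _ ?_
      rw [h00, hb]
      exact ⟨a + b * k * t, by linear_combination ha⟩
    · change _ ∣ π (g' 0 1)
      refine hπk _ _ ?_
      have : g' 0 1 = g 0 1 := by simp [hg']
      rw [this, hb]
      exact hkk.mul_right _
    · change _ ∣ π (g' 1 0)
      refine hπk _ _ ?_
      have : g' 1 0 = g 1 0 + k * (g 1 1 * t) := by simp [hg']; ring
      rw [this, hc]
      exact dvd_add (hkk.mul_right _) (dvd_mul_right _ _)
  obtain ⟨e, he, hee⟩ := exists_lift_E π Ideal.Quotient.mk_surjective hmem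
  refine ⟨V (k * t) * e⁻¹, mul_mem (V_mem_E (dvd_mul_right _ _)) (inv_mem he), ?_⟩
  rw [L, MonoidHom.mem_ker, ← mul_assoc, map_mul, map_inv, hee, mul_inv_cancel]

/-- The polynomial expression `∏_{i < d} (x ^ d - x ^ i)`, which for a prime `x` is the order of
`GL_d(𝔽_x)`. -/
def HZ (d : ℕ) (x : ℤ) : ℤ := ∏ i ∈ Finset.range d, (x ^ d - x ^ i)

/-- Units modulo a rational prime `p` have order dividing `|GL_d(𝔽_p)|`, because `𝓞 K / p` acts
faithfully on a `d`-dimensional space over `𝔽_p`. -/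
lemma pow_HZ {p : ℕ} (hp : p.Prime) {x : 𝓞 K} (h : IsCoprime x (p : 𝓞 K)) :
    (p : 𝓞 K) ∣ x ^ (HZ (Module.finrank ℤ (𝓞 K)) p).natAbs - 1 := by
  have : Fact p.Prime := ⟨hp⟩
  set d := Module.finrank ℤ (𝓞 K) with hd
  let b := Module.finBasis ℤ (𝓞 K)
  let Φ : 𝓞 K →+* Matrix (Fin d) (Fin d) (ZMod p) :=
    ((Int.castRingHom (ZMod p)).mapMatrix).comp (Algebra.leftMulMatrix b).toRingHom
  have hker : ∀ y : 𝓞 K, Φ y = 0 → (p : 𝓞 K) ∣ y := by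
    intro y hy
    have h1 : ∀ j, (p : 𝓞 K) ∣ y * b j := by
      intro j
      rw [← b.sum_repr (y * b j)]
      refine Finset.dvd_sum fun i _ => ?_
      have h2 : ((Algebra.leftMulMatrix b y i j : ℤ) : ZMod p) = 0 :=
        congrArg (fun m => m i j) hy
      rw [Algebra.leftMulMatrix_eq_repr_mul, ZMod.intCast_zmod_eq_zero_iff_dvd] at h2
      obtain ⟨c, hc⟩ := h2
      exact ⟨(c : 𝓞 K) * b i, by rw [hc, zsmul_eq_mul]; push_cast; ring⟩
    have : y = ∑ j, (b.repr 1 j) • (y * b j) := by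
      conv_lhs => rw [← mul_one y, ← b.sum_repr 1, Finset.mul_sum]
      exact Finset.sum_congr rfl fun j _ => by rw [mul_smul_comm]
    rw [this]
    refine Finset.dvd_sum fun j _ => ?_
    rw [zsmul_eq_mul]
    exact (h1 j).mul_left _
  have hΦp : Φ (p : 𝓞 K) = 0 := by
    rw [map_natCast]
    rw [← Matrix.diagonal_natCast]
    simp
  obtain ⟨s, t, hst⟩ := h
  have hu : Φ s * Φ x = 1 := by
    rw [← map_mul, ← map_one Φ, ← hst, map_add, map_mul Φ t, hΦp, mul_zero, add_zero]
  have hu' : Φ x * Φ s = 1 := by rw [← map_mul, mul_comm, map_mul, hu]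
  let u : (Matrix (Fin d) (Fin d) (ZMod p))ˣ := ⟨Φ x, Φ s, hu', hu⟩
  have hcard : (HZ d p).natAbs = Nat.card (GL (Fin d) (ZMod p)) := by
    rw [Matrix.card_GL_field, HZ, ← Fin.prod_univ_eq_prod_range (fun i => ((p : ℤ) ^ d - (p : ℤ) ^ i)),
      ← Int.natCast_inj]
    have e : ∏ i : Fin d, ((p : ℤ) ^ d - (p : ℤ) ^ (i : ℕ)) =
        ((∏ i : Fin d, (p ^ d - p ^ (i : ℕ)) : ℕ) : ℤ) := by
      push_cast
      refine Finset.prod_congr rfl fun i _ => ?_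
      rw [Nat.cast_sub (Nat.pow_le_pow_right hp.pos i.2.le)]
      push_cast; rfl
    rw [e, Int.natAbs_natCast, ZMod.card]
  have hpow : u ^ (HZ d p).natAbs = 1 := by
    rw [hcard]
    exact pow_card_eq_one' (G := GL (Fin d) (ZMod p)) (x := u)
  refine hker _ ?_
  have := congrArg Units.val hpow
  rw [Units.val_pow_eq_pow_val, Units.val_one] at this
  rw [map_sub, map_pow, map_one, sub_eq_zero]
  exact this

lemma HZ_modEq {d : ℕ} {n x y : ℤ} (h : n ∣ x - y) : n ∣ HZ d x - HZ d y := by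
  have : x ≡ y [ZMOD n] := (Int.modEq_iff_dvd.2 (by simpa using (dvd_neg.2 h)))
  refine Int.ModEq.dvd ?_
  refine Int.ModEq.symm ?_
  unfold HZ
  exact Int.ModEq.prod fun i _ => (this.pow _).sub (this.pow _)

lemma HZ_dvd_of_inv {d : ℕ} {t x y : ℤ} (h : t ∣ x * y - 1) (hy : t ∣ HZ d y) : t ∣ HZ d x := by
  have h1 : x * y ≡ 1 [ZMOD t] := Int.ModEq.symm (Int.modEq_iff_dvd.2 h)
  have h2 : HZ d x ≡ HZ d y * ∏ i ∈ Finset.range d, (-(x ^ (d + i))) [ZMOD t] := by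
    unfold HZ
    rw [← Finset.prod_mul_distrib]
    refine Int.ModEq.prod fun i _ => ?_
    have e : (y ^ d - y ^ i) * -(x ^ (d + i)) = (x * y) ^ i * x ^ d - (x * y) ^ d * x ^ i := by
      ring
    rw [e]
    have h3 := ((h1.pow i).mul_right (x ^ d)).sub ((h1.pow d).mul_right (x ^ i))
    simpa using h3.symm
  exact (Int.ModEq.dvd_iff h2).2 (hy.mul_right _)

lemma HZ_ne_zero {d : ℕ} {x : ℤ} (hx : 2 ≤ x) : HZ d x ≠ 0 := by
  unfold HZ
  refine Finset.prod_ne_zero_iff.2 fun i hi => ?_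
  have := pow_lt_pow_right₀ (by omega : 1 < x) (Finset.mem_range.1 hi)
  omega

end NF4

/-! ### Rows congruent to rational integers -/

section NF5

set_option linter.unusedSectionVars false

variable {K : Type*} [Field K] [NumberField K]

local notation "ι" => algebraMap (𝓞 K) K

lemma exists_nat_dvd {a : 𝓞 K} (ha : a ≠ 0) : ∃ A : ℕ, 1 ≤ A ∧ a ∣ (A : 𝓞 K) := by
  refine ⟨Ideal.absNorm (Ideal.span {a}), ?_, ?_⟩
  · rw [Nat.one_le_iff_ne_zero, Ne, Ideal.absNorm_eq_zero_iff]
    simpa using ha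
  · rw [← Ideal.mem_span_singleton]
    exact Ideal.absNorm_mem _

lemma absNorm_natCast (p : ℕ) :
    Ideal.absNorm (Ideal.span {(p : 𝓞 K)}) = p ^ Module.finrank ℤ (𝓞 K) := by
  rw [Ideal.absNorm_span_singleton, ← map_natCast (algebraMap ℤ (𝓞 K)), Algebra.norm_algebraMap]
  simp [Int.natAbs_pow]

lemma not_isUnit_two : ¬ IsUnit (2 : 𝓞 K) := by
  intro h
  have h1 := absNorm_natCast (K := K) 2
  rw [show ((2 : ℕ) : 𝓞 K) = 2 by norm_num, Ideal.span_singleton_eq_top.2 h, Ideal.absNorm_top] at h1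
  have h2 : 0 < Module.finrank ℤ (𝓞 K) := Module.finrank_pos
  have := Nat.one_lt_pow h2.ne' (by norm_num : 1 < 2)
  omega

/-- There are at most `[K : ℚ]` primes above a rational prime. -/
lemma card_maximal_le {p : ℕ} (hp : p.Prime) (T : Finset (Ideal (𝓞 K)))
    (hT : ∀ P ∈ T, P.IsMaximal ∧ (p : 𝓞 K) ∈ P) : T.card ≤ Module.finrank ℤ (𝓞 K) := by
  have hp0 : (p : 𝓞 K) ≠ 0 := by exact_mod_cast hp.ne_zero
  have hne : ∀ P ∈ T, P ≠ ⊥ := by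
    rintro P hP rfl
    exact hp0 (by simpa using (hT _ hP).2)
  have h1 : ∏ P ∈ T, P ∣ Ideal.span {(p : 𝓞 K)} := by
    refine Finset.prod_primes_dvd _ (fun P hP => ?_) fun P hP => ?_
    · exact (Ideal.prime_iff_isPrime (hne P hP)).2 (hT P hP).1.isPrime
    · exact Ideal.dvd_span_singleton.2 (hT P hP).2
  have h2 : ∏ P ∈ T, Ideal.absNorm P ∣ p ^ Module.finrank ℤ (𝓞 K) := by
    rw [← absNorm_natCast, ← map_prod]
    exact map_dvd _ h1
  have h3 : ∀ P ∈ T, p ≤ Ideal.absNorm P := by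
    intro P hP
    have h4 : Ideal.absNorm P ∣ p ^ Module.finrank ℤ (𝓞 K) := (Finset.dvd_prod_of_mem _ hP).trans h2
    obtain ⟨j, -, hj⟩ := (Nat.dvd_prime_pow hp).1 h4
    rw [hj]
    have hj0 : j ≠ 0 := by
      rintro rfl
      rw [pow_zero, Ideal.absNorm_eq_one_iff] at hj
      exact (hT P hP).1.ne_top hj
    exact Nat.le_self_pow hj0 p
  have h4 : p ^ T.card ≤ p ^ Module.finrank ℤ (𝓞 K) := by
    refine le_trans ?_ (Nat.le_of_dvd (Nat.pow_pos hp.pos) h2)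
    rw [← Finset.prod_const]
    exact Finset.prod_le_prod' h3
  exact (Nat.pow_le_pow_iff_right hp.one_lt).1 h4

lemma isCoprime_natCast {m n : ℕ} (h : m.Coprime n) : IsCoprime (m : 𝓞 K) (n : 𝓞 K) := by
  have h1 : IsCoprime (m : ℤ) (n : ℤ) := Nat.isCoprime_iff_coprime.2 h
  simpa using h1.map (Int.castRingHom (𝓞 K))

lemma isCoprime_add_mul {x y z w : 𝓞 K} (h : IsCoprime x y) (hw : w = x + y * z) :
    IsCoprime w y := by
  rw [hw]; exact IsCoprime.add_mul_left_left h z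

/-- A variant of `exists_coprime_add` with a rational integer as multiplier. At a prime `p` not
dividing `e`, so that `p > d`, one of `d + 1` residues of `m` modulo `p` is admissible, because
each of the at most `d` primes above `p` excludes at most one. -/
lemma exists_coprime_add_nat {a b : 𝓞 K} (h : IsCoprime a b) {e : ℕ}
    (hfe : (Module.finrank ℤ (𝓞 K)).factorial ∣ e) (hbe : IsCoprime b (e : 𝓞 K)) (D : ℕ)
    (hD : 1 ≤ D) : ∃ m : ℕ, e ∣ m ∧ IsCoprime (b + m * a) (D : 𝓞 K) := by
  classical
  induction D using Nat.strong_induction_on with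
  | _ D ih =>
    rcases Nat.lt_or_ge 1 D with hD1 | hD1
    swap
    · have : D = 1 := by omega
      subst this
      exact ⟨0, dvd_zero _, by simpa using isCoprime_one_right⟩
    obtain ⟨p, hp, D', rfl⟩ := Nat.exists_prime_and_dvd (by omega : D ≠ 1)
    have hD' : 1 ≤ D' := by
      rcases Nat.eq_zero_or_pos D' with rfl | h
      · simp at hD
      · exact h
    obtain ⟨m, hm, hmD⟩ := ih D' (by nlinarith [hp.two_le]) hD'
    by_cases hpD : p ∣ D'
    · refine ⟨m, hm, ?_⟩
      push_cast
      refine IsCoprime.mul_right (hmD.of_isCoprime_of_dvd_right ?_) hmD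
      exact Nat.cast_dvd_cast hpD
    by_cases hpe : p ∣ e
    · refine ⟨m, hm, ?_⟩
      push_cast
      refine IsCoprime.mul_right ?_ hmD
      obtain ⟨m', rfl⟩ := hm
      refine IsCoprime.of_isCoprime_of_dvd_right ?_ (Nat.cast_dvd_cast hpe)
      exact isCoprime_add_mul hbe (z := (m' : 𝓞 K) * a) (by push_cast; ring)
    by_contra! hcon
    have hbad : ∀ j : ℕ, ∃ P : Ideal (𝓞 K), P.IsMaximal ∧ (p : 𝓞 K) ∈ P ∧
        b + ((m + e * D' * j : ℕ) : 𝓞 K) * a ∈ P := by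
      intro j
      by_contra! hno
      refine hcon (m + e * D' * j) (dvd_add hm ⟨D' * j, by ring⟩) ?_
      push_cast
      refine IsCoprime.mul_right ?_ (isCoprime_add_mul hmD (z := (e : 𝓞 K) * (j : 𝓞 K) * a) (by ring))
      have := isCoprime_of_forall_maximal hno
      simpa using this
    choose P hP1 hP2 hP3 using hbad
    have hcard : ((Finset.range (Module.finrank ℤ (𝓞 K) + 1)).image P).card ≤
        Module.finrank ℤ (𝓞 K) := by
      refine card_maximal_le hp _ fun Q hQ => ?_
      obtain ⟨j, -, rfl⟩ := Finset.mem_image.1 hQ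
      exact ⟨hP1 j, hP2 j⟩
    obtain ⟨i, hi, j, hj, hij, hPij⟩ := Finset.exists_ne_map_eq_of_card_lt_of_maps_to
      (s := Finset.range (Module.finrank ℤ (𝓞 K) + 1)) (f := P)
      (t := (Finset.range (Module.finrank ℤ (𝓞 K) + 1)).image P)
      (by rw [Finset.card_range]; omega) (fun x hx => Finset.mem_image_of_mem P hx)
    have hpd : Module.finrank ℤ (𝓞 K) < p := by
      by_contra! hle
      exact hpe ((hp.dvd_factorial.2 hle).trans hfe)
    have hpr := (hP1 i).isPrime
    have hcopP : ∀ n : ℤ, ¬ (p : ℤ) ∣ n → (n : 𝓞 K) ∉ P i := by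
      intro n hn hmem
      have h1 : IsCoprime (p : ℤ) n := (Nat.prime_iff_prime_int.1 hp).coprime_iff_not_dvd.2 hn
      obtain ⟨x, y, hxy⟩ := h1
      refine (hP1 i).ne_top ((P i).eq_top_iff_one.2 ?_)
      have e1 : (1 : 𝓞 K) = (x : 𝓞 K) * p + y * n := by exact_mod_cast hxy.symm
      rw [e1]
      exact (P i).add_mem ((P i).mul_mem_left _ (hP2 i)) ((P i).mul_mem_left _ hmem)
    have hdiff : (((e : ℤ) * D' * (i - j) : ℤ) : 𝓞 K) * a ∈ P i := by
      have h1 := (P i).sub_mem (hP3 i) (hPij ▸ hP3 j)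
      convert h1 using 1
      push_cast; ring
    have hnd : ¬ (p : ℤ) ∣ (e : ℤ) * D' * (i - j) := by
      have hpz := Nat.prime_iff_prime_int.1 hp
      rw [hpz.dvd_mul, hpz.dvd_mul, Int.natCast_dvd_natCast, Int.natCast_dvd_natCast]
      rintro ((h | h) | h)
      · exact hpe h
      · exact hpD h
      · have hi' := Finset.mem_range.1 hi
        have hj' := Finset.mem_range.1 hj
        have := Int.eq_zero_of_abs_lt_dvd h (by rw [abs_lt]; constructor <;> omega)
        omega
    have ha : a ∈ P i := (hpr.mem_or_mem hdiff).resolve_left (hcopP _ hnd)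
    have hb : b ∈ P i := by
      have h1 := (P i).sub_mem (hP3 i) ((P i).mul_mem_left ((m + e * D' * i : ℕ) : 𝓞 K) ha)
      simpa using h1
    obtain ⟨x, y, hxy⟩ := h
    exact (hP1 i).ne_top ((P i).eq_top_iff_one.2 (hxy ▸ (P i).add_mem
      ((P i).mul_mem_left _ ha) ((P i).mul_mem_left _ hb)))

open IntermediateField in
/-- Every element of `𝓞 K` has a multiple in `ℤ[γ]` if `γ` is a primitive element. -/
lemma exists_mul_mem_adjoin {γ : 𝓞 K} (hγ : ℚ⟮ι γ⟯ = ⊤) (a : 𝓞 K) :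
    ∃ D : ℕ, 1 ≤ D ∧ (D : 𝓞 K) * a ∈ Algebra.adjoin ℤ {γ} := by
  have hmem : ι a ∈ Algebra.adjoin ℚ {ι γ} := by
    rw [← IntermediateField.adjoin_simple_toSubalgebra_of_isAlgebraic
      (Algebra.IsAlgebraic.isAlgebraic (R := ℚ) (ι γ)), hγ]
    trivial
  have key : ∀ z ∈ Algebra.adjoin ℚ {ι γ}, ∃ D : ℕ, 1 ≤ D ∧ ∃ r ∈ Algebra.adjoin ℤ {γ},
      (D : K) * z = ι r := by
    intro z hz
    induction hz using Algebra.adjoin_induction with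
    | mem x hx =>
      rw [Set.mem_singleton_iff] at hx
      exact ⟨1, le_rfl, γ, Algebra.subset_adjoin rfl, by simp [hx]⟩
    | algebraMap q =>
      refine ⟨q.den, q.den_pos, algebraMap ℤ (𝓞 K) q.num, Subalgebra.algebraMap_mem _ _, ?_⟩
      have := congrArg (algebraMap ℚ K) (Rat.mul_den_eq_num q)
      rw [map_mul, map_natCast, map_intCast] at this
      rw [mul_comm, this]; simp
    | add x y _ _ hx hy =>
      obtain ⟨D, hD, r, hr, h⟩ := hx
      obtain ⟨D', hD', r', hr', h'⟩ := hy
      refine ⟨D * D', Nat.mul_pos hD hD', D' * r + D * r',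
        add_mem (mul_mem (natCast_mem _ _) hr) (mul_mem (natCast_mem _ _) hr'), ?_⟩
      rw [map_add, map_mul, map_mul, ← h, ← h', map_natCast, map_natCast]
      push_cast; ring
    | mul x y _ _ hx hy =>
      obtain ⟨D, hD, r, hr, h⟩ := hx
      obtain ⟨D', hD', r', hr', h'⟩ := hy
      refine ⟨D * D', Nat.mul_pos hD hD', r * r', mul_mem hr hr', ?_⟩
      rw [map_mul, ← h, ← h']
      push_cast; ring
  obtain ⟨D, hD, r, hr, h⟩ := key _ hmem
  refine ⟨D, hD, ?_⟩
  have : (D : 𝓞 K) * a = r := RingOfIntegers.coe_injective (by rw [map_mul, map_natCast, h])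
  rwa [this]

open IntermediateField in
/-- Some element congruent to `x` modulo `y` is primitive. -/
lemma exists_primitive (x : 𝓞 K) {y : ℕ} (hy : 1 ≤ y) :
    ∃ c : 𝓞 K, ℚ⟮ι (x + y * c)⟯ = ⊤ := by
  have hprim := Field.exists_primitive_element ℚ K
  have hfin : Finite (IntermediateField ℚ K) :=
    Field.finite_intermediateField_of_exists_primitive_element ℚ K hprim
  obtain ⟨θ', hθ'⟩ := hprim
  obtain ⟨N, hN, θ, hθ⟩ := exists_den θ'
  obtain ⟨t, t', htt, h⟩ := Finite.exists_ne_map_eq_of_infinite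
    (fun t : ℕ => ℚ⟮ι (x + y * (t * θ))⟯)
  refine ⟨t * θ, ?_⟩
  have h1 : ι (x + y * (t * θ)) ∈ ℚ⟮ι (x + y * (t * θ))⟯ := mem_adjoin_simple_self ℚ _
  have h2 : ι (x + y * (t' * θ)) ∈ ℚ⟮ι (x + y * (t * θ))⟯ := by
    rw [h]; exact mem_adjoin_simple_self ℚ _
  rw [eq_top_iff, ← hθ', adjoin_simple_le_iff]
  generalize ℚ⟮ι (x + y * (t * θ))⟯ = F at h1 h2
  have h3 := F.sub_mem h1 h2
  have hne : ((y : K) * ((t : K) - t') * N) ≠ 0 := by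
    refine mul_ne_zero (mul_ne_zero ?_ (sub_ne_zero.2 ?_)) ?_
    · exact_mod_cast (by omega : y ≠ 0)
    · exact_mod_cast htt
    · exact_mod_cast (by omega : N ≠ 0)
  have e : θ' = ((y : K) * ((t : K) - t') * N)⁻¹ * (ι (x + y * (t * θ)) - ι (x + y * (t' * θ))) := by
    rw [eq_inv_mul_iff_mul_eq₀ hne]
    simp only [map_add, map_mul, map_natCast, ← hθ]
    ring
  rw [e]
  refine F.mul_mem (F.inv_mem (F.mul_mem (F.mul_mem ?_ (F.sub_mem ?_ ?_)) ?_)) h3 <;>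
    exact _root_.natCast_mem F _

/-- A coprime row `(a, b)` can be changed by a column operation to `(a, β)` so that `a` is congruent
to a rational integer `α` modulo `β`, and `β` divides a rational integer `B` coprime to `n` and `α`.
After `b` is changed to some `b₀` for which a multiple `γ` of `b₀` is primitive, `β` is taken of the
form `b₀ + m * a` with `m` an integer: then `γ` is an integer modulo `β`, hence so is all of `ℤ[γ]`,
and `ℤ[γ]` contains a multiple of `a`. -/
lemma exists_integer_row {a b : 𝓞 K} (h : IsCoprime a b) (ha : a ≠ 0) {n : ℕ} (hn : 1 ≤ n) :
    ∃ (s : 𝓞 K) (B α : ℕ), 1 ≤ B ∧ b + a * s ∣ (B : 𝓞 K) ∧ b + a * s ∣ a - α ∧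
      B.Coprime n ∧ α.Coprime B := by
  set e := n * (Module.finrank ℤ (𝓞 K)).factorial with he
  have he1 : 1 ≤ e := Nat.mul_pos hn (Nat.factorial_pos _)
  have he0 : (e : 𝓞 K) ≠ 0 := by exact_mod_cast (by omega : e ≠ 0)
  obtain ⟨s0, hs0⟩ := exists_coprime_add h he0
  obtain ⟨A, hA, a', ha'⟩ := exists_nat_dvd ha
  obtain ⟨c, hc⟩ := exists_primitive (a' * (b + a * s0)) (Nat.mul_pos hA he1)
  set b0 := b + a * (s0 + e * c) with hb0
  set γ := a' * b0 with hγ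
  have hγe : a' * (b + a * s0) + ((A * e : ℕ) : 𝓞 K) * c = γ := by
    push_cast
    rw [ha', hγ, hb0]
    ring
  rw [hγe] at hc
  obtain ⟨D, hD, hDmem⟩ := exists_mul_mem_adjoin hc a
  have hab0 : IsCoprime a b0 := (isCoprime_add_mul h.symm hb0).symm
  have hb0e : IsCoprime b0 (e : 𝓞 K) := isCoprime_add_mul hs0 (z := a * c) (by rw [hb0]; ring)
  obtain ⟨m, ⟨m', hm'⟩, hmD⟩ := exists_coprime_add_nat hab0 (Dvd.intro_left n rfl) hb0e (2 * D) (by omega)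
  set β := b0 + m * a with hβ
  have hβs : b + a * (s0 + e * c + m) = β := by rw [hβ, hb0]; ring
  have hβ2 : IsCoprime β 2 := hmD.of_isCoprime_of_dvd_right ⟨D, by push_cast; ring⟩
  have hβD : IsCoprime β (D : 𝓞 K) := hmD.of_isCoprime_of_dvd_right ⟨2, by push_cast; ring⟩
  have hβe : IsCoprime β (e : 𝓞 K) := isCoprime_add_mul hb0e (z := (m' : 𝓞 K) * a)
    (by rw [hβ, hm', he]; push_cast; ring)
  have hβn : IsCoprime β (n : 𝓞 K) :=
    hβe.of_isCoprime_of_dvd_right (Nat.cast_dvd_cast (Dvd.intro _ rfl))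
  have hβa : IsCoprime β a := isCoprime_add_mul hab0.symm (z := m) (by rw [hβ]; ring)
  have hβ0 : β ≠ 0 := by
    intro h0
    rw [h0, isCoprime_zero_left] at hβ2
    exact not_isUnit_two hβ2
  -- every element of `ℤ[γ]` is congruent to an integer modulo `β`
  have hinteg : ∀ z ∈ Algebra.adjoin ℤ {γ}, ∃ i : ℤ, β ∣ z - i := by
    intro z hz
    induction hz using Algebra.adjoin_induction with
    | mem x hx =>
      rw [Set.mem_singleton_iff] at hx
      refine ⟨-(m * A : ℕ), a', ?_⟩
      rw [hx, hγ, hβ]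
      push_cast
      rw [ha']; ring
    | algebraMap q => exact ⟨q, by simp⟩
    | add x y _ _ hx hy =>
      obtain ⟨i, r, hi⟩ := hx
      obtain ⟨j, r', hj⟩ := hy
      refine ⟨i + j, r + r', ?_⟩
      push_cast
      linear_combination hi + hj
    | mul x y _ _ hx hy =>
      obtain ⟨i, r, hi⟩ := hx
      obtain ⟨j, r', hj⟩ := hy
      refine ⟨i * j, r * y + i * r', ?_⟩
      push_cast
      linear_combination y * hi + i * hj
  obtain ⟨i, r, hi⟩ := hinteg _ hDmem
  obtain ⟨j, hj, r', hj'⟩ := exists_pow_sub_one hβ0 hβD.symm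
  obtain ⟨j, rfl⟩ : ∃ j', j = j' + 1 := ⟨j - 1, by omega⟩
  obtain ⟨B0, hB0, hβB0⟩ := exists_nat_dvd hβ0
  have hα0 : β ∣ a - ((D ^ j * i : ℤ) : 𝓞 K) := by
    refine ⟨D ^ j * r - r' * a, ?_⟩
    push_cast
    linear_combination (D : 𝓞 K) ^ j * hi - a * hj'
  obtain ⟨α, hα⟩ : ∃ α : ℕ, (α : ℤ) = (D ^ j * i : ℤ) % B0 + B0 := by
    have : 0 ≤ (D ^ j * i : ℤ) % B0 + B0 :=
      add_nonneg (Int.emod_nonneg _ (by omega)) (by omega)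
    exact ⟨_, Int.toNat_of_nonneg this⟩
  have hβα : β ∣ a - (α : 𝓞 K) := by
    have h1 : ((α : ℤ) : 𝓞 K) = ((D ^ j * i : ℤ) : 𝓞 K) - B0 * ((D ^ j * i : ℤ) / B0 : ℤ) + B0 := by
      rw [hα, Int.emod_def]; push_cast; ring
    rw [Int.cast_natCast] at h1
    have e2 : a - (α : 𝓞 K) = (a - ((D ^ j * i : ℤ) : 𝓞 K)) +
        B0 * (((D ^ j * i : ℤ) / B0 : ℤ) - 1) := by
      rw [h1]; ring
    rw [e2]
    exact dvd_add hα0 (hβB0.mul_right _)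
  have hβα' : IsCoprime β (α : 𝓞 K) := by
    obtain ⟨z, hz⟩ := hβα
    have : IsCoprime (α : 𝓞 K) β := isCoprime_add_mul hβa.symm (z := -z) (by linear_combination -hz)
    exact this.symm
  obtain ⟨A1, B, l, hAB, hA1, hB⟩ := exists_decomp B0 (n * α) hB0
  refine ⟨s0 + e * c + m, B, α, ?_, ?_, ?_, ?_, ?_⟩
  · rcases Nat.eq_zero_or_pos B with rfl | h
    · omega
    · exact h
  · rw [hβs]
    rw [hAB] at hβB0
    push_cast at hβB0
    refine IsCoprime.dvd_of_dvd_mul_left ?_ hβB0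
    have h1 : IsCoprime β (((n * α) ^ l : ℕ) : 𝓞 K) := by
      push_cast
      exact (IsCoprime.mul_right hβn hβα').pow_right
    exact h1.of_isCoprime_of_dvd_right (Nat.cast_dvd_cast hA1)
  · rw [hβs]; exact hβα
  · exact hB.coprime_dvd_right (Dvd.intro _ rfl)
  · exact (hB.coprime_dvd_right (Dvd.intro_left _ rfl)).symm

end NF5

/-! ### Comparison of the two completions, and Dirichlet's theorem -/

section NF6

set_option linter.unusedSectionVars false

variable {K : Type*} [Field K] [NumberField K]

local notation "ι" => algebraMap (𝓞 K) K

/-- Sequences in `SL₂(K)` that are Cauchy for the topology defined by the groups `EK K k`, and tend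
to `1` for the congruence topology. They represent elements of the kernel of the map from the
completion for the first topology to the completion for the second. -/
def IsC (c : ℕ → SL2 K) : Prop :=
  (∀ k, 1 ≤ k → ∃ N, ∀ m ≥ N, (c N)⁻¹ * c m ∈ EK K k) ∧
    ∀ k, 1 ≤ k → ∃ N, ∀ m ≥ N, c m ∈ LK K k

lemma IsC.conj (hK : 1 < Fintype.card (InfinitePlace K)) {c : ℕ → SL2 K} (hc : IsC c)
    (s : SL2 K) : IsC fun n => s * c n * s⁻¹ := by
  constructor
  · intro k hk
    obtain ⟨k', hk', h⟩ := EK_conj hK s k hk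
    obtain ⟨N, hN⟩ := hc.1 k' hk'
    refine ⟨N, fun m hm => ?_⟩
    have := h _ (hN m hm)
    convert this using 1
    group
  · intro k hk
    obtain ⟨k', hk', h⟩ := LK_conj s k hk
    obtain ⟨N, hN⟩ := hc.2 k' hk'
    exact ⟨N, fun m hm => h _ (hN m hm)⟩

/-- The elements of `SL₂(K)` that commute, in the limit, with all the sequences in `IsC`. -/
def Z (hK : 1 < Fintype.card (InfinitePlace K)) : Subgroup (SL2 K) where
  carrier := {t | ∀ c : ℕ → SL2 K, IsC c → ∀ k, 1 ≤ k →
    ∃ N, ∀ n ≥ N, (c n)⁻¹ * t * c n * t⁻¹ ∈ EK K k}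
  one_mem' := by
    intro c _ k _
    refine ⟨0, fun n _ => ?_⟩
    simp [one_mem]
  mul_mem' := by
    intro t t' ht ht' c hc k hk
    obtain ⟨k', hk', h⟩ := EK_conj hK t k hk
    obtain ⟨N, hN⟩ := ht c hc k hk
    obtain ⟨N', hN'⟩ := ht' c hc k' hk'
    refine ⟨max N N', fun n hn => ?_⟩
    have := mul_mem (hN n (le_trans (le_max_left _ _) hn))
      (h _ (hN' n (le_trans (le_max_right _ _) hn)))
    convert this using 1
    group
  inv_mem' := by
    intro t ht c hc k hk
    obtain ⟨k', hk', h⟩ := EK_conj hK t⁻¹ k hk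
    obtain ⟨N, hN⟩ := ht c hc k' hk'
    refine ⟨N, fun n hn => ?_⟩
    have := inv_mem (h _ (hN n hn))
    convert this using 1
    group

lemma mem_Z {hK : 1 < Fintype.card (InfinitePlace K)} {t : SL2 K} : t ∈ Z hK ↔
    ∀ c : ℕ → SL2 K, IsC c → ∀ k, 1 ≤ k →
      ∃ N, ∀ n ≥ N, (c n)⁻¹ * t * c n * t⁻¹ ∈ EK K k := Iff.rfl

lemma Z_normal (hK : 1 < Fintype.card (InfinitePlace K)) : (Z hK).Normal := by
  refine ⟨fun t ht s => ?_⟩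
  intro c hc k hk
  obtain ⟨k', hk', h⟩ := EK_conj hK s k hk
  obtain ⟨N, hN⟩ := ht _ (hc.conj hK s⁻¹) k' hk'
  refine ⟨N, fun n hn => ?_⟩
  have := h _ (hN n hn)
  convert this using 1
  group

open Nat in
/-- Every element of the congruence subgroup of level `k ^ 2` agrees, modulo the elementary group of
level `k`, with all the terms of a sequence in `IsC`. -/
lemma exists_isC {k : ℕ} (hk : 1 ≤ k) {γ : SL2 (𝓞 K)} (hγ : γ ∈ L (𝓞 K) (k ^ 2)) :
    ∃ c : ℕ → SL2 (𝓞 K), IsC (fun n => inc K (c n)) ∧ ∀ n, γ⁻¹ * c n ∈ E (𝓞 K) k := by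
  have step : ∀ (n : ℕ) (g : {g : SL2 (𝓞 K) // g ∈ L (𝓞 K) ((k * n !) ^ 2)}),
      ∃ h : {g : SL2 (𝓞 K) // g ∈ L (𝓞 K) ((k * (n + 1)!) ^ 2)},
        g.1⁻¹ * h.1 ∈ E (𝓞 K) (k * n !) := by
    rintro n ⟨g, hg⟩
    obtain ⟨e, he, h⟩ := exists_mul_mem_L (n := (k * (n + 1)!) ^ 2)
      (Nat.pos_of_ne_zero (by have := Nat.factorial_ne_zero (n + 1); positivity)) hg
    exact ⟨⟨_, h⟩, by simpa using he⟩
  choose F hF using step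
  let c : ∀ n, {g : SL2 (𝓞 K) // g ∈ L (𝓞 K) ((k * n !) ^ 2)} :=
    fun n => Nat.rec ⟨γ, by simpa using hγ⟩ F n
  have hc : ∀ n, (c n).1⁻¹ * (c (n + 1)).1 ∈ E (𝓞 K) (k * n !) := fun n => hF n (c n)
  have hc' : ∀ n m, n ≤ m → (c n).1⁻¹ * (c m).1 ∈ E (𝓞 K) (k * n !) := by
    intro n m hnm
    induction m, hnm using Nat.le_induction with
    | base => simp [one_mem]
    | succ m hm ih =>
      have := mul_mem ih (E_anti (Nat.mul_dvd_mul_left k (Nat.factorial_dvd_factorial hm)) (hc m))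
      convert this using 1
      group
  refine ⟨fun n => (c n).1, ⟨?_, ?_⟩, ?_⟩
  · intro l hl
    refine ⟨l, fun m hm => ?_⟩
    beta_reduce
    rw [← map_inv, ← map_mul, inc_mem_EK]
    exact E_anti (Dvd.dvd.mul_left (Nat.dvd_factorial hl le_rfl) k) (hc' l m hm)
  · intro l hl
    refine ⟨l, fun m hm => ?_⟩
    rw [inc_mem_LK]
    exact L_anti (((Nat.dvd_factorial hl hm).mul_left k).trans (dvd_pow_self _ two_ne_zero)) (c m).2
  · intro n
    exact E_anti (Dvd.intro _ rfl) (show γ⁻¹ * (c n).1 ∈ _ from hc' 0 n (Nat.zero_le _))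

lemma exists_crt {m n : ℕ} (hmn : m.Coprime n) {x y : ℤ} (hx : IsCoprime x m)
    (hy : IsCoprime y n) :
    ∃ z : ℤ, (m : ℤ) ∣ z - x ∧ (n : ℤ) ∣ z - y ∧ IsCoprime z ((m * n : ℕ) : ℤ) := by
  obtain ⟨u, v, huv⟩ := Nat.isCoprime_iff_coprime.2 hmn
  set z : ℤ := x * (v * n) + y * (u * m) with hz
  have hzm : (m : ℤ) ∣ z - x := ⟨u * (y - x), by rw [hz]; linear_combination x * huv⟩
  have hzn : (n : ℤ) ∣ z - y := ⟨v * (x - y), by rw [hz]; linear_combination y * huv⟩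
  refine ⟨z, hzm, hzn, ?_⟩
  push_cast
  refine IsCoprime.mul_right ?_ ?_
  · obtain ⟨t, ht⟩ := hzm
    rw [show z = x + m * t by linear_combination ht]
    exact hx.add_mul_left_left t
  · obtain ⟨t, ht⟩ := hzn
    rw [show z = y + n * t by linear_combination ht]
    exact hy.add_mul_left_left t

/-- Dirichlet's theorem, for two congruences with coprime moduli. -/
lemma exists_prime {m n : ℕ} (hm : 1 ≤ m) (hn : 1 ≤ n) (hmn : m.Coprime n) {x y : ℤ}
    (hx : IsCoprime x m) (hy : IsCoprime y n) (N : ℕ) :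
    ∃ p : ℕ, N < p ∧ p.Prime ∧ (m : ℤ) ∣ p - x ∧ (n : ℤ) ∣ p - y := by
  obtain ⟨z, hzm, hzn, hcop⟩ := exists_crt hmn hx hy
  have : NeZero (m * n) := ⟨by positivity⟩
  obtain ⟨p, hpN, hp, hpz⟩ := Nat.forall_exists_prime_gt_and_eq_mod
    ((ZMod.coe_int_isUnit_iff_isCoprime _ _).2 hcop.symm) N
  have h : ((m * n : ℕ) : ℤ) ∣ p - z := by
    rw [← ZMod.intCast_zmod_eq_zero_iff_dvd]
    push_cast
    rw [hpz, sub_self]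
  push_cast at h
  refine ⟨p, hpN, hp, ?_, ?_⟩
  · have := dvd_add ((Dvd.intro _ rfl).trans h) hzm
    simpa using this
  · have := dvd_add ((Dvd.intro_left _ rfl).trans h) hzn
    simpa using this

lemma dvd_of_int {m : ℕ} {x : ℤ} (h : (m : ℤ) ∣ x) : (m : 𝓞 K) ∣ (x : 𝓞 K) := by
  have := map_dvd (Int.castRingHom (𝓞 K)) h
  simpa using this

lemma ne_zero_of_dvd_sub_one {Q : ℕ} (hQ : 2 ∣ Q) {a : 𝓞 K} (ha : (Q : 𝓞 K) ∣ a - 1) : a ≠ 0 := by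
  rintro rfl
  have h2 : (2 : 𝓞 K) ∣ (Q : 𝓞 K) := by exact_mod_cast (Nat.cast_dvd_cast hQ : ((2:ℕ) : 𝓞 K) ∣ Q)
  have := h2.trans ha
  rw [zero_sub, dvd_neg] at this
  exact not_isUnit_two (isUnit_of_dvd_one this)

/-- If the upper left entry of `g`, of level `k`, divides `v² - 1`, then conjugation by the diagonal
matrix `D v` changes `g` by elementary matrices of level `k` only. -/
lemma D_conj_row {k : ℕ} {g : SL2 (𝓞 K)} (hg : g ∈ L (𝓞 K) k) {v : (𝓞 K)ˣ}
    (hv : g 0 0 ∣ (v : 𝓞 K) ^ 2 - 1) :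
    ∃ e₁ ∈ E (𝓞 K) k, ∃ e₂ ∈ E (𝓞 K) k, (D v)⁻¹ * g * D v = e₁ * g * e₂ := by
  obtain ⟨t, ht⟩ := hv
  obtain ⟨b, hb⟩ := (mem_L.1 hg).2.1
  have hvv : ((v⁻¹ : (𝓞 K)ˣ) : 𝓞 K) * v = 1 := by simp
  set w := ((v⁻¹ : (𝓞 K)ˣ) : 𝓞 K) with hw
  have hU : (k : 𝓞 K) ∣ k * (-(w ^ 2 * t * b)) := dvd_mul_right _ _
  obtain ⟨s, hs⟩ := same_row_L (k := k) (g := (D v)⁻¹ * g * D v)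
    (h := g * U (k * (-(w ^ 2 * t * b))))
    (by simpa using (L_normal (S := 𝓞 K) k).conj_mem g hg (D v)⁻¹)
    (mul_mem hg (U_mem_L hU))
    (by
      simp only [← D_inv]
      simp
      rw [← hw]
      linear_combination g 0 0 * hvv)
    (by
      simp only [← D_inv]
      simp
      rw [← hw, hb]
      linear_combination (-(k * b * w ^ 2)) * ht + k * b * (w * v + 1) * hvv)
  exact ⟨_, V_mem_E (dvd_mul_right _ s), _, U_mem_E hU, by rw [hs, ← mul_assoc (V _)]⟩

/-- Elements of a congruence subgroup can be moved by elementary matrices so that the upper left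
corner is a product of two primes, in prescribed inverse residue classes modulo the level. If the
row is normalized to `(a, β)` by `exists_integer_row`, the primes are chosen congruent to `1` and to
`α` modulo `B`. -/
lemma exists_two_primes {k Q : ℕ} (hQ : 1 ≤ Q) (hkQ : k ∣ Q) (h2Q : 2 ∣ Q) {δ : SL2 (𝓞 K)}
    (hδ : δ ∈ L (𝓞 K) (Q ^ 2)) {ρ ρ' : ℤ} (hρ : ((Q ^ 2 : ℕ) : ℤ) ∣ ρ * ρ' - 1) :
    ∃ p₁ p₂ : ℕ, p₁.Prime ∧ p₂.Prime ∧ p₁ < p₂ ∧ ((Q ^ 2 : ℕ) : ℤ) ∣ p₁ - ρ ∧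
      ((Q ^ 2 : ℕ) : ℤ) ∣ p₂ - ρ' ∧ ∃ e ∈ E (𝓞 K) k, (δ * e) 0 0 = (p₁ * p₂ : ℕ) := by
  obtain ⟨h00, ⟨b2, hb⟩, -, -⟩ := mem_L.1 hδ
  have hQ2 : (Q : 𝓞 K) ∣ ((Q ^ 2 : ℕ) : 𝓞 K) := Nat.cast_dvd_cast (dvd_pow_self _ two_ne_zero)
  have ha0 := ne_zero_of_dvd_sub_one h2Q (hQ2.trans h00)
  have hdet := det_eq δ
  set a := δ 0 0 with ha
  have hcop : IsCoprime a (Q * b2) := by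
    refine ⟨δ 1 1, -(Q * δ 1 0), ?_⟩
    rw [hb] at hdet
    push_cast at hdet
    linear_combination hdet
  obtain ⟨s, B, α, hB, hβB, hβα, hBQ, hαB⟩ := exists_integer_row hcop ha0 hQ
  set β := (Q : 𝓞 K) * b2 + a * s with hβ
  have hcoQ : (Q ^ 2).Coprime B := (hBQ.symm.pow_left 2)
  have hρc : IsCoprime ρ ((Q ^ 2 : ℕ) : ℤ) := by
    obtain ⟨t, ht⟩ := hρ
    exact ⟨ρ', -t, by linear_combination ht⟩
  have hρc' : IsCoprime ρ' ((Q ^ 2 : ℕ) : ℤ) := by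
    obtain ⟨t, ht⟩ := hρ
    exact ⟨ρ, -t, by linear_combination ht⟩
  have hQp : 1 ≤ Q ^ 2 := Nat.one_le_pow _ _ hQ
  obtain ⟨p₁, -, hp₁, hp₁Q, hp₁B⟩ := exists_prime hQp hB hcoQ hρc
    (isCoprime_one_left : IsCoprime (1 : ℤ) B) 0
  obtain ⟨p₂, hlt, hp₂, hp₂Q, hp₂B⟩ := exists_prime hQp hB hcoQ hρc'
    (Nat.isCoprime_iff_coprime.2 hαB) p₁
  refine ⟨p₁, p₂, hp₁, hp₂, hlt, hp₁Q, hp₂Q, ?_⟩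
  have h1 : ((Q ^ 2 : ℕ) : 𝓞 K) ∣ (p₁ * p₂ : ℕ) - a := by
    have : ((Q ^ 2 : ℕ) : ℤ) ∣ p₁ * p₂ - 1 := by
      obtain ⟨t, ht⟩ := hρ
      obtain ⟨t1, ht1⟩ := hp₁Q
      obtain ⟨t2, ht2⟩ := hp₂Q
      exact ⟨t1 * p₂ + ρ * t2 + t, by linear_combination p₂ * ht1 + ρ * ht2 + ht⟩
    have := dvd_sub (dvd_of_int (K := K) this) h00
    push_cast at this ⊢
    simpa using this
  have h2 : β ∣ (p₁ * p₂ : ℕ) - a := by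
    have : (B : ℤ) ∣ p₁ * p₂ - α := by
      obtain ⟨t1, ht1⟩ := hp₁B
      obtain ⟨t2, ht2⟩ := hp₂B
      exact ⟨t1 * p₂ + t2, by linear_combination p₂ * ht1 + ht2⟩
    have := dvd_sub (hβB.trans (dvd_of_int (K := K) this)) hβα
    push_cast at this ⊢
    simpa using this
  have hβQ : IsCoprime ((Q ^ 2 : ℕ) : 𝓞 K) β :=
    (isCoprime_natCast hcoQ).of_isCoprime_of_dvd_right hβB
  obtain ⟨r, hr⟩ := hβQ.mul_dvd h1 h2
  push_cast at hr
  refine ⟨U (Q * s) * V (Q * r), mul_mem (U_mem_E ?_) (V_mem_E ?_), ?_⟩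
  · exact (Nat.cast_dvd_cast hkQ).trans (dvd_mul_right _ _)
  · exact (Nat.cast_dvd_cast hkQ).trans (dvd_mul_right _ _)
  · simp [← ha, hb]
    rw [hβ] at hr
    linear_combination -hr

end NF6

/-! ### Centrality -/

section NF7

set_option linter.unusedSectionVars false

variable {K : Type*} [Field K] [NumberField K]

local notation "ι" => algebraMap (𝓞 K) K

/-- If `x` and `y` lie in the class of `r` and in the inverse class modulo a multiple of `t`, then a
divisor `t` of `HZ d x * HZ d y` divides `HZ d r ^ 2`. -/
lemma dvd_HZ_sq {d : ℕ} {P x y r t : ℤ} (hx : P ∣ x - r) (hy : P ∣ r * y - 1) (ht : t ∣ P)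
    (h : t ∣ HZ d x * HZ d y) : t ∣ HZ d r ^ 2 := by
  obtain ⟨t₁, t₂, h₁, h₂, rfl⟩ := exists_dvd_and_dvd_of_dvd_mul h
  rw [sq]
  refine mul_dvd_mul ?_ ?_
  · have := HZ_modEq (d := d) (((Dvd.intro _ rfl).trans ht).trans hx)
    exact (dvd_sub_right h₁).1 this
  · exact HZ_dvd_of_inv (((Dvd.intro_left _ rfl).trans ht).trans hy) h₂

lemma D_conj_mem_EK (u : (𝓞 K)ˣ) {k : ℕ} {e : SL2 K} (he : e ∈ EK K k) :
    inc K (D u) * e * (inc K (D u))⁻¹ ∈ EK K k := by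
  obtain ⟨e, he, rfl⟩ := he
  rw [← map_inv, ← map_mul, ← map_mul, inc_mem_EK]
  exact D_conj_mem_E u he

/-- The exponents `j` for which the commutator of `g` and `D (w ^ j)` is elementary of level `k`. -/
def J (w : (𝓞 K)ˣ) (k : ℕ) (g : SL2 K) : AddSubgroup ℤ where
  carrier := {j | g⁻¹ * inc K (D (w ^ j)) * g * (inc K (D (w ^ j)))⁻¹ ∈ EK K k}
  zero_mem' := by
    simp [D_one, one_mem]
  add_mem' := by
    intro i j hi hj
    have := mul_mem hi (D_conj_mem_EK (w ^ i) hj)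
    rw [Set.mem_ofPred_eq, zpow_add, D_mul, map_mul]
    convert this using 1
    group
  neg_mem' := by
    intro i hi
    have := inv_mem (D_conj_mem_EK (w ^ (-i)) hi)
    rw [zpow_neg, D_inv, map_inv] at this
    rw [Set.mem_ofPred_eq, zpow_neg, D_inv, map_inv]
    convert this using 1
    group

lemma mem_J {w : (𝓞 K)ˣ} {k : ℕ} {g : SL2 K} {j : ℤ} : j ∈ J w k g ↔
    g⁻¹ * inc K (D (w ^ j)) * g * (inc K (D (w ^ j)))⁻¹ ∈ EK K k := Iff.rfl

lemma J_mul {w : (𝓞 K)ˣ} {k : ℕ} {g e : SL2 K} (he : e ∈ EK K k) {j : ℤ} (hj : j ∈ J w k g) :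
    j ∈ J w k (g * e) := by
  rw [mem_J] at hj ⊢
  have := mul_mem (mul_mem (inv_mem he) hj) (D_conj_mem_EK (w ^ j) he)
  convert this using 1
  group

lemma pow_sub_one_dvd {R : Type*} [CommRing R] {x p : R} {m n : ℕ} (h : p ∣ x ^ m - 1)
    (hmn : m ∣ n) : p ∣ x ^ n - 1 := by
  obtain ⟨t, rfl⟩ := hmn
  rw [pow_mul]
  exact h.trans (by simpa using sub_dvd_pow_sub_pow (x ^ m) 1 t)

lemma isCoprime_unit (w : (𝓞 K)ˣ) (x : 𝓞 K) : IsCoprime (w : 𝓞 K) x :=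
  (isCoprime_one_left (x := x)).of_isCoprime_of_dvd_left (Units.isUnit w).dvd

/-- For suitable primes `p₁` and `p₂` in prescribed inverse residue classes, the product of `HZ d p₁`
and `HZ d p₂` is an exponent in `J w k₁`, because `p₁ p₂` can be made the upper left entry of `δ`. -/
lemma exists_mem_J (w : (𝓞 K)ˣ) {k k₁ Q : ℕ} (hk : k₁ ∣ k) (hQ : 1 ≤ Q) (hkQ : k ∣ Q)
    (h2Q : 2 ∣ Q) {δ : SL2 (𝓞 K)} (hδ : δ ∈ L (𝓞 K) (Q ^ 2))
    (hconj : ∀ e ∈ EK K k, (inc K δ)⁻¹ * e * inc K δ ∈ EK K k₁)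
    {ρ ρ' : ℤ} (hρ : ((Q ^ 2 : ℕ) : ℤ) ∣ ρ * ρ' - 1) :
    ∃ p₁ p₂ : ℕ, p₁.Prime ∧ p₂.Prime ∧ ((Q ^ 2 : ℕ) : ℤ) ∣ p₁ - ρ ∧
      ((Q ^ 2 : ℕ) : ℤ) ∣ p₂ - ρ' ∧
      HZ (Module.finrank ℤ (𝓞 K)) p₁ * HZ (Module.finrank ℤ (𝓞 K)) p₂ ∈ J w k₁ (inc K δ) := by
  obtain ⟨p₁, p₂, hp₁, hp₂, hlt, h₁, h₂, e, he, hrow⟩ := exists_two_primes hQ hkQ h2Q hδ hρ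
  refine ⟨p₁, p₂, hp₁, hp₂, h₁, h₂, ?_⟩
  set d := Module.finrank ℤ (𝓞 K)
  set j : ℕ := (HZ d p₁ * HZ d p₂).natAbs with hj
  suffices h : (j : ℤ) ∈ J w k₁ (inc K δ) by
    rcases Int.natAbs_eq (HZ d p₁ * HZ d p₂) with h' | h'
    · rw [h']; exact h
    · rw [h']; exact neg_mem h
  have hg : δ * e ∈ L (𝓞 K) k :=
    mul_mem (L_anti (hkQ.trans (dvd_pow_self _ two_ne_zero)) hδ) (E_le_L k he)
  have hdvd : (δ * e) 0 0 ∣ ((w ^ j : (𝓞 K)ˣ) : 𝓞 K) ^ 2 - 1 := by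
    rw [hrow, Units.val_pow_eq_pow_val, ← pow_mul]
    push_cast
    refine IsCoprime.mul_dvd (isCoprime_natCast ((Nat.coprime_primes hp₁ hp₂).2 hlt.ne)) ?_ ?_
    · refine pow_sub_one_dvd (pow_HZ hp₁ (isCoprime_unit w _)) (Dvd.dvd.mul_right ?_ _)
      rw [hj, Int.natAbs_mul]
      exact dvd_mul_right _ _
    · refine pow_sub_one_dvd (pow_HZ hp₂ (isCoprime_unit w _)) (Dvd.dvd.mul_right ?_ _)
      rw [hj, Int.natAbs_mul]
      exact dvd_mul_left _ _
  obtain ⟨e₁, he₁, e₂, he₂, heq⟩ := D_conj_row hg hdvd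
  suffices h : -(j : ℤ) ∈ J w k₁ (inc K δ) by simpa using neg_mem h
  rw [mem_J, zpow_neg, zpow_natCast]
  set T := D (w ^ j)
  have h1 : T⁻¹ * δ * T = e₁ * δ * (e * e₂ * (T⁻¹ * e * T)⁻¹) := by
    have : T⁻¹ * δ * T = (T⁻¹ * (δ * e) * T) * (T⁻¹ * e * T)⁻¹ := by group
    rw [this, heq]
    group
  have h2 : T⁻¹ * e * T ∈ E (𝓞 K) k := by
    have := D_conj_mem_E (w ^ j)⁻¹ he
    rwa [D_inv, inv_inv] at this
  have h3 : e * e₂ * (T⁻¹ * e * T)⁻¹ ∈ E (𝓞 K) k := mul_mem (mul_mem he he₂) (inv_mem h2)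
  have h4 := mul_mem (hconj _ (inc_mem_EK.2 he₁)) (inc_mem_EK.2 (E_anti hk h3))
  have h5 := congrArg (inc K) h1
  simp only [map_mul, map_inv] at h4 h5
  rw [D_inv, map_inv, inv_inv]
  convert h4 using 1
  rw [mul_assoc, mul_assoc, ← mul_assoc _ (inc K δ), h5]
  group

/-- The exponent `m` for which the diagonal matrix of `w ^ m` is shown to be in `Z`, for all units `w`.
The residues `3` and `2` are those prescribed modulo the 2-part and the odd part of the level. -/
def m₀ (d : ℕ) : ℤ := HZ d 3 ^ 2 * HZ d 2 ^ 2

/-- For each sequence in `IsC` and each level, the exponents in the group `J` of a late enough term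
contain two numbers whose greatest common divisor divides `m₀ d`, and hence contain `m₀ d`. -/
lemma D_pow_mem_Z (hK : 1 < Fintype.card (InfinitePlace K)) (w : (𝓞 K)ˣ) :
    inc K (D (w ^ m₀ (Module.finrank ℤ (𝓞 K)))) ∈ Z hK := by
  set d := Module.finrank ℤ (𝓞 K) with hd
  rw [mem_Z]
  intro c hc k₁ hk₁
  obtain ⟨n₀, hn₀⟩ := hc.1 k₁ hk₁
  obtain ⟨k', hk', hconj⟩ := EK_conj hK (c n₀)⁻¹ k₁ hk₁
  set k := k₁ * k' with hk
  have hkpos : 1 ≤ k := Nat.mul_pos hk₁ hk'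
  -- the element `c n` for large `n` gives the same exponents as `c n₀`
  have key : ∀ (Q : ℕ), 1 ≤ Q → k ∣ Q → 2 ∣ Q → ∀ ρ ρ' : ℤ, ((Q ^ 2 : ℕ) : ℤ) ∣ ρ * ρ' - 1 →
      ∃ p₁ p₂ : ℕ, p₁.Prime ∧ p₂.Prime ∧ ((Q ^ 2 : ℕ) : ℤ) ∣ p₁ - ρ ∧
        ((Q ^ 2 : ℕ) : ℤ) ∣ p₂ - ρ' ∧ HZ d p₁ * HZ d p₂ ∈ J w k₁ (c n₀) := by
    intro Q hQ hkQ h2Q ρ ρ' hρ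
    obtain ⟨N, hN⟩ := hc.2 (Q ^ 2) (Nat.one_le_pow _ _ hQ)
    obtain ⟨δ, hδ, hδc⟩ := hN (max N n₀) (le_max_left _ _)
    set n := max N n₀ with hn
    have he := hn₀ n (le_max_right _ _)
    rw [← hδc] at he
    have hconj' : ∀ e ∈ EK K k, (inc K δ)⁻¹ * e * inc K δ ∈ EK K k₁ := by
      intro e hee
      have h1 := hconj e (EK_anti (Dvd.intro_left _ rfl) hee)
      have h2 := mul_mem (mul_mem (inv_mem he) h1) he
      convert h2 using 1
      group
    obtain ⟨p₁, p₂, hp₁, hp₂, h₁, h₂, hJ⟩ :=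
      exists_mem_J w (Dvd.intro _ rfl) hQ hkQ h2Q hδ hconj' hρ
    refine ⟨p₁, p₂, hp₁, hp₂, h₁, h₂, ?_⟩
    have := J_mul (inv_mem he) hJ
    simpa using this
  -- a first exponent `n₁`, then a second one for residues prescribed modulo a multiple of `n₁`
  obtain ⟨p₁, p₂, hp₁, hp₂, -, -, hJ₁⟩ := key (2 * k) (by omega) (Dvd.intro_left _ rfl)
    (Dvd.intro _ rfl) 1 1 (by simp)
  set n₁ := HZ d p₁ * HZ d p₂ with hn₁
  have hn₁0 : n₁ ≠ 0 := mul_ne_zero (HZ_ne_zero (by exact_mod_cast hp₁.two_le))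
    (HZ_ne_zero (by exact_mod_cast hp₂.two_le))
  set Q := 2 * k * n₁.natAbs with hQ
  have hQ1 : 1 ≤ Q := Nat.mul_pos (by omega) (Int.natAbs_pos.2 hn₁0)
  obtain ⟨P, m, j, hPm, hP, hm⟩ := exists_decomp (Q ^ 2) 2 (Nat.one_le_pow _ _ hQ1)
  have hPc : Nat.Coprime m P := (hm.pow_right j).coprime_dvd_right hP
  have h3P : Nat.Coprime 3 P := Nat.Coprime.coprime_dvd_right hP (Nat.Coprime.pow_right j (by norm_num))
  obtain ⟨ρ, hρ3, hρ2, ρ', t, hρt⟩ := exists_crt (x := 3) (y := 2) hPc.symm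
    (by exact_mod_cast Nat.isCoprime_iff_coprime.2 h3P)
    (by exact_mod_cast Nat.isCoprime_iff_coprime.2 hm.symm)
  have hρρ : ((P * m : ℕ) : ℤ) ∣ ρ * ρ' - 1 := ⟨-t, by linear_combination hρt⟩
  obtain ⟨q₁, q₂, hq₁, hq₂, h₁, h₂, hJ₂⟩ := key Q hQ1
    ⟨2 * n₁.natAbs, by rw [hQ]; ring⟩ ⟨k * n₁.natAbs, by rw [hQ]; ring⟩ ρ ρ' (by rw [hPm]; exact hρρ)
  rw [hPm] at h₁ h₂
  have hPd : (P : ℤ) ∣ ((P * m : ℕ) : ℤ) := by push_cast; exact dvd_mul_right _ _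
  have hmd : (m : ℤ) ∣ ((P * m : ℕ) : ℤ) := by push_cast; exact dvd_mul_left _ _
  have inv_aux : ∀ (x r : ℤ), x ∣ ((P * m : ℕ) : ℤ) → x ∣ ρ - r → x ∣ r * q₂ - 1 := by
    intro x r hx hr
    obtain ⟨t, ht⟩ := hr
    obtain ⟨t1, ht1⟩ := hx.trans h₂
    obtain ⟨t2, ht2⟩ := hx.trans hρρ
    exact ⟨-t * q₂ + ρ * t1 + t2, by linear_combination -q₂ * ht + ρ * ht1 + ht2⟩
  have hgcd : (Int.gcd n₁ (HZ d q₁ * HZ d q₂) : ℤ) ∣ m₀ d := by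
    set g := (Int.gcd n₁ (HZ d q₁ * HZ d q₂) : ℤ) with hg
    have hg1 : g ∣ (P : ℤ) * m := by
      have h1 : g ∣ (Q : ℤ) := by
        refine (Int.gcd_dvd_left _ _).trans ?_
        rw [hQ]
        push_cast
        exact Dvd.dvd.mul_left ((dvd_abs _ _).2 dvd_rfl) _
      have h2 : (Q : ℤ) ∣ (P : ℤ) * m := by
        exact_mod_cast hPm ▸ dvd_pow_self Q two_ne_zero
      exact h1.trans h2
    have hg2 : g ∣ HZ d q₁ * HZ d q₂ := Int.gcd_dvd_right _ _
    obtain ⟨t₁, t₂, ht₁, ht₂, ht⟩ := exists_dvd_and_dvd_of_dvd_mul hg1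
    rw [ht] at hg2 ⊢
    refine mul_dvd_mul ?_ ?_
    · refine dvd_HZ_sq (x := q₁) (y := q₂) (P := P) ?_ (inv_aux _ _ hPd hρ3) ht₁
        ((Dvd.intro _ rfl).trans hg2)
      have := dvd_add (hPd.trans h₁) hρ3
      simpa using this
    · refine dvd_HZ_sq (x := q₁) (y := q₂) (P := m) ?_ (inv_aux _ _ hmd hρ2) ht₂
        ((Dvd.intro_left _ rfl).trans hg2)
      have := dvd_add (hmd.trans h₁) hρ2
      simpa using this
  have hJ : m₀ d ∈ J w k₁ (c n₀) := by
    obtain ⟨t, ht⟩ := hgcd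
    rw [ht, mul_comm]
    refine AddSubgroup.zsmul_mem _ ?_ t
    rw [Int.gcd_eq_gcd_ab, mul_comm n₁, mul_comm (HZ d q₁ * HZ d q₂)]
    exact add_mem (AddSubgroup.zsmul_mem _ hJ₁ _) (AddSubgroup.zsmul_mem _ hJ₂ _)
  refine ⟨n₀, fun n hn => ?_⟩
  have := J_mul (hn₀ n hn) hJ
  rw [mul_inv_cancel_left] at this
  exact this

/-- The normal subgroup `Z` contains `D v` for a unit `v` of infinite order, hence also the commutators
of `D v` with unipotents, and these are all the unipotents. -/
lemma Z_eq_top (hK : 1 < Fintype.card (InfinitePlace K)) : Z hK = ⊤ := by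
  set d := Module.finrank ℤ (𝓞 K) with hd
  obtain ⟨w, hw⟩ := exists_unit K hK
  have hN := Z_normal hK
  have hm0 : m₀ d ≠ 0 := mul_ne_zero (pow_ne_zero _ (HZ_ne_zero (by norm_num)))
    (pow_ne_zero _ (HZ_ne_zero (by norm_num)))
  set v := w ^ m₀ d with hv
  have hv2 : v ^ 2 ≠ 1 := by
    intro h
    refine hw ((m₀ d).natAbs * 2) (Nat.mul_pos (Int.natAbs_pos.2 hm0) two_pos) ?_
    rw [pow_mul]
    rcases Int.natAbs_eq (m₀ d) with h' | h'
    · rw [hv, h', zpow_natCast] at h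
      exact h
    · rw [hv, h', zpow_neg, zpow_natCast, inv_pow, inv_eq_one] at h
      exact h
  have hne : ∀ u : (𝓞 K)ˣ, u ^ 2 ≠ 1 → (unitK u : K) ^ 2 - 1 ≠ 0 := by
    intro u hu h
    apply hu
    apply Units.ext
    have : ι ((u : 𝓞 K) ^ 2) = ι 1 := by
      rw [map_pow, map_one, ← unitK_val]
      linear_combination h
    rw [Units.val_pow_eq_pow_val, Units.val_one]
    exact RingOfIntegers.coe_injective this
  have hDv : D (unitK v) ∈ Z hK := by
    rw [← inc_D]
    exact D_pow_mem_Z hK w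
  have hvi : v⁻¹ ^ 2 ≠ 1 := by rwa [inv_pow, ne_eq, inv_eq_one]
  have hcomm : ∀ g : SL2 K, D (unitK v) * g * (D (unitK v))⁻¹ * g⁻¹ ∈ Z hK := by
    intro g
    have := mul_mem hDv (hN.conj_mem _ (inv_mem hDv) g)
    convert this using 1
    group
  rw [eq_top_iff]
  intro g _
  refine sl2_induction (fun x => ?_) (fun x => ?_) (fun _ _ => mul_mem) g
  · have := hcomm (U (x / ((unitK v : K) ^ 2 - 1)))
    rw [D_conj_U, ← U_neg, ← U_add] at this
    convert this using 2
    have := hne v hv2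
    field_simp
    ring
  · have := hcomm (V (x / ((unitK v⁻¹ : K) ^ 2 - 1)))
    rw [D_conj_V, ← V_neg, ← V_add] at this
    convert this using 2
    have := hne v⁻¹ hvi
    rw [show (((unitK v)⁻¹ : Kˣ) : K) = (unitK v⁻¹ : K) by simp [unitK]]
    field_simp
    ring

lemma all_mem_Z (hK : 1 < Fintype.card (InfinitePlace K)) (t : SL2 K) : t ∈ Z hK := by
  rw [Z_eq_top]; trivial

/-- The congruence subgroup of level `k ^ 2` normalizes the elementary group of level `k`. -/
lemma L_conj_mem_E (hK : 1 < Fintype.card (InfinitePlace K)) {k : ℕ} (hk : 1 ≤ k)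
    {γ : SL2 (𝓞 K)} (hγ : γ ∈ L (𝓞 K) (k ^ 2)) {e : SL2 (𝓞 K)} (he : e ∈ E (𝓞 K) k) :
    γ⁻¹ * e * γ ∈ E (𝓞 K) k := by
  obtain ⟨c, hc, h⟩ := exists_isC hk hγ
  obtain ⟨N, hN⟩ := all_mem_Z hK (inc K e) _ hc k hk
  have h1 := hN N le_rfl
  rw [← map_inv, ← map_mul, ← map_mul, ← map_inv, ← map_mul, inc_mem_EK] at h1
  have h2 := mul_mem (mul_mem (h N) (mul_mem h1 he)) (inv_mem (h N))
  convert h2 using 1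
  group

/-- The commutator subgroup of the congruence subgroup of level `k ^ 2` lies in the elementary
group of level `k`. -/
lemma L_comm_mem_E (hK : 1 < Fintype.card (InfinitePlace K)) {k : ℕ} (hk : 1 ≤ k)
    {γ δ : SL2 (𝓞 K)} (hγ : γ ∈ L (𝓞 K) (k ^ 2)) (hδ : δ ∈ L (𝓞 K) (k ^ 2)) :
    γ⁻¹ * δ * γ * δ⁻¹ ∈ E (𝓞 K) k := by
  obtain ⟨c, hc, h⟩ := exists_isC hk hγ
  obtain ⟨N, hN⟩ := all_mem_Z hK (inc K δ) _ hc k hk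
  have h1 := hN N le_rfl
  rw [← map_inv, ← map_mul, ← map_mul, ← map_inv, ← map_mul, inc_mem_EK] at h1
  have h2 := L_conj_mem_E hK hk (inv_mem hδ) (h N)
  have h3 := mul_mem (mul_mem (h N) h1) (inv_mem h2)
  convert h3 using 1
  group

/-- Conjugation by the diagonal matrix of any nonzero `x ∈ 𝓞 K` acts trivially modulo elementary
matrices, on a deep enough congruence subgroup. -/
lemma D_comm_mem_EK (hK : 1 < Fintype.card (InfinitePlace K)) {k X : ℕ} (hk : 1 ≤ k) (hX : 1 ≤ X)
    {x : 𝓞 K} (hx : x ∣ (X : 𝓞 K)) (u : Kˣ) (hu : (u : K) = ι x)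
    {δ : SL2 (𝓞 K)} (hδ : δ ∈ L (𝓞 K) ((k * X ^ 2) ^ 2)) :
    (inc K δ)⁻¹ * D u * inc K δ * (D u)⁻¹ ∈ EK K k := by
  obtain ⟨c, hc, h⟩ := exists_isC (Nat.mul_pos hk (pow_pos hX 2)) hδ
  obtain ⟨N, hN⟩ := all_mem_Z hK (D u) _ hc k hk
  have h1 := hN N le_rfl
  obtain ⟨y, hy⟩ := hx
  have hy' : (X : K) = ι x * ι y := by
    rw [← map_mul, ← hy, map_natCast]
  have h2 : D u * inc K (δ⁻¹ * c N) * (D u)⁻¹ ∈ EK K k := by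
    refine conj_E_le (inc K) (fun r => ⟨?_, ?_⟩) (h N)
    · rw [inc_U, D_conj_U]
      refine U_mem_EK (x ^ 2 * X ^ 2 * r) ?_
      simp only [map_mul, map_pow, map_natCast, Nat.cast_mul, Nat.cast_pow, hu]
      ring
    · rw [inc_V, D_conj_V]
      refine V_mem_EK (y ^ 2 * r) ?_
      have hu0 : ((u⁻¹ : Kˣ) : K) * ι x = 1 := by rw [← hu]; simp
      simp only [map_mul, map_pow, map_natCast, Nat.cast_mul, Nat.cast_pow, hy']
      linear_combination (k * ι y ^ 2 * ι r * (((u⁻¹ : Kˣ) : K) * ι x + 1)) * hu0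
  have h3 := EK_anti (Dvd.intro _ rfl) (inc_mem_EK.2 (h N))
  have h4 := mul_mem (mul_mem h3 h1) (inv_mem h2)
  rw [map_mul, map_inv] at h4
  convert h4 using 1
  group

end NF7

/-! ### Symbols of rows -/

section NF8

set_option linter.unusedSectionVars false

variable {K : Type*} [Field K] [NumberField K]

local notation "ι" => algebraMap (𝓞 K) K

/-- `(a, b)` is the first row of an element of the congruence subgroup of level `q`. -/
def Row (q : ℕ) (a b : 𝓞 K) : Prop := (q : 𝓞 K) ∣ a - 1 ∧ (q : 𝓞 K) ∣ b ∧ IsCoprime a b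

lemma isCoprime_of_dvd_sub_one {a m : 𝓞 K} (h : m ∣ a - 1) : IsCoprime a m := by
  obtain ⟨t, ht⟩ := h
  exact ⟨1, -t, by linear_combination ht⟩

lemma row_of_mem {q : ℕ} {g : SL2 (𝓞 K)} (hg : g ∈ L (𝓞 K) q) : Row q (g 0 0) (g 0 1) := by
  obtain ⟨h1, h2, -, -⟩ := mem_L.1 hg
  exact ⟨h1, h2, g 1 1, -g 1 0, by linear_combination det_eq g⟩

/-- The lower left corner of a matrix with a given first row `(a, b)` can be chosen divisible by
a given `m` coprime to `a`. -/
lemma Row.exists_mem {q : ℕ} {a b m : 𝓞 K} (h : Row q a b) (hm : IsCoprime a m) :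
    ∃ g ∈ L (𝓞 K) q, g 0 0 = a ∧ g 0 1 = b ∧ (q : 𝓞 K) * m ∣ g 1 0 := by
  obtain ⟨h1, h2, h3⟩ := h
  obtain ⟨d, c, hdc⟩ := h3.mul_right ((isCoprime_of_dvd_sub_one h1).mul_right hm)
  refine ⟨mk a b (-(q * m * c)) d (by linear_combination hdc), mem_L.2 ⟨?_, ?_, ?_, ?_⟩, ?_, ?_, ?_⟩
  · simpa using h1
  · simpa using h2
  · exact ⟨-(m * c), by simp; ring⟩
  · obtain ⟨t, ht⟩ := h1
    exact ⟨-(d * t) - c * b * m, by simp; linear_combination hdc - d * ht⟩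
  · simp
  · simp
  · exact ⟨-c, by simp⟩

variable {k : ℕ} {A : Type*} [CommGroup A]

open Classical in
/-- The symbol of a row `(a, b)`: the image under `π` of any matrix with first row `(a, b)`. It is
`1` by convention if there is no such matrix. -/
noncomputable def sym (π : L (𝓞 K) (k ^ 2) →* A) (a b : 𝓞 K) : A :=
  if h : ∃ g : L (𝓞 K) (k ^ 2), g.1 0 0 = a ∧ g.1 0 1 = b then π h.choose else 1

variable {π : L (𝓞 K) (k ^ 2) →* A}

lemma natCast_dvd_sq {R : Type*} [CommRing R] : (k : R) ∣ ((k ^ 2 : ℕ) : R) :=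
  Nat.cast_dvd_cast (dvd_pow_self _ two_ne_zero)

lemma pi_eq (hπ : ∀ g, π g = 1 ↔ g.1 ∈ E (𝓞 K) k) {g h : L (𝓞 K) (k ^ 2)}
    (hgh : g.1⁻¹ * h.1 ∈ E (𝓞 K) k) : π g = π h := by
  rw [← inv_mul_eq_one, ← map_inv, ← map_mul, hπ]
  simpa using hgh

lemma sym_eq (hπ : ∀ g, π g = 1 ↔ g.1 ∈ E (𝓞 K) k) {g : SL2 (𝓞 K)} (hg : g ∈ L (𝓞 K) (k ^ 2))
    {a b : 𝓞 K} (ha : g 0 0 = a) (hb : g 0 1 = b) : sym π a b = π ⟨g, hg⟩ := by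
  have h : ∃ g : L (𝓞 K) (k ^ 2), g.1 0 0 = a ∧ g.1 0 1 = b := ⟨⟨g, hg⟩, ha, hb⟩
  rw [sym, dif_pos h]
  obtain ⟨s, hs⟩ := same_row_L hg h.choose.2 (ha.trans h.choose_spec.1.symm)
    (hb.trans h.choose_spec.2.symm)
  have hV : (⟨g, hg⟩ : L (𝓞 K) (k ^ 2)) =
      ⟨V (((k ^ 2 : ℕ) : 𝓞 K) * s), V_mem_L (dvd_mul_right _ _)⟩ * h.choose := by
    apply Subtype.ext
    simpa using hs
  have h1 := (hπ ⟨V (((k ^ 2 : ℕ) : 𝓞 K) * s), V_mem_L (dvd_mul_right _ _)⟩).2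
    (V_mem_E (natCast_dvd_sq.trans (dvd_mul_right _ _)))
  rw [hV, map_mul, h1, one_mul]

lemma Row.add_left {q : ℕ} {a b s : 𝓞 K} (h : Row q a b) : Row q (a + b * s) b := by
  refine ⟨?_, h.2.1, h.2.2.add_mul_left_left s⟩
  have := dvd_add h.1 (h.2.1.mul_right s)
  convert this using 1
  ring

lemma Row.add_right {q : ℕ} {a b s : 𝓞 K} (h : Row q a b) (hs : (q : 𝓞 K) ∣ s) :
    Row q a (b + a * s) := by
  refine ⟨h.1, dvd_add h.2.1 (hs.mul_left a), ?_⟩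
  have := h.2.2.add_mul_left_right s
  exact this

lemma sym_add_left (hπ : ∀ g, π g = 1 ↔ g.1 ∈ E (𝓞 K) k) {a b s : 𝓞 K} (h : Row (k ^ 2) a b)
    (hs : ((k ^ 2 : ℕ) : 𝓞 K) ∣ s) : sym π (a + b * s) b = sym π a b := by
  obtain ⟨g, hg, rfl, rfl, -⟩ := h.exists_mem isCoprime_one_right
  rw [sym_eq hπ hg rfl rfl, sym_eq hπ (mul_mem hg (V_mem_L hs)) (by simp) (by simp)]
  refine (pi_eq hπ ?_).symm
  simpa using V_mem_E (natCast_dvd_sq.trans hs)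

lemma sym_add_right (hπ : ∀ g, π g = 1 ↔ g.1 ∈ E (𝓞 K) k) {a b s : 𝓞 K} (h : Row (k ^ 2) a b)
    (hs : ((k ^ 2 : ℕ) : 𝓞 K) ∣ s) : sym π a (b + a * s) = sym π a b := by
  obtain ⟨g, hg, rfl, rfl, -⟩ := h.exists_mem isCoprime_one_right
  rw [sym_eq hπ hg rfl rfl, sym_eq hπ (mul_mem hg (U_mem_L hs)) (by simp) (by simp [add_comm])]
  refine (pi_eq hπ ?_).symm
  simpa using U_mem_E (natCast_dvd_sq.trans hs)

/-- A row can be normalized so that the off-diagonal entries of a matrix containing it are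
divisible by a given `m` coprime to `a`. -/
lemma Row.exists_norm {q : ℕ} {a b m : 𝓞 K} (h : Row q a b) (hm : IsCoprime a m) :
    ∃ t : 𝓞 K, ∃ g ∈ L (𝓞 K) q, g 0 0 = a ∧ g 0 1 = b + a * (q * t) ∧ (q : 𝓞 K) * m ∣ g 0 1 ∧
      (q : 𝓞 K) * m ∣ g 1 0 := by
  obtain ⟨b0, hb0⟩ := h.2.1
  obtain ⟨u, v, huv⟩ := hm
  obtain ⟨g, hg, h1, h2, h3⟩ := (h.add_right (s := (q : 𝓞 K) * (-(b0 * u))) (dvd_mul_right _ _)).exists_mem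
    ⟨u, v, huv⟩
  refine ⟨_, g, hg, h1, h2, ⟨b0 * v, ?_⟩, h3⟩
  rw [h2, hb0]
  linear_combination (-(q * b0)) * huv

lemma Row.mul_sq {q : ℕ} {a b x : 𝓞 K} (h : Row q a b) (hx : IsCoprime a x) :
    Row q a (b * x ^ 2) :=
  ⟨h.1, h.2.1.mul_right _, h.2.2.mul_right hx.pow_right⟩

/-- The conjugate by the diagonal matrix of `x` of a matrix whose lower left entry is divisible by
`x²` is integral; its first row is `(a, b * x²)` if that of the matrix is `(a, b)`. -/
lemma exists_D_conj {q : ℕ} {x m : 𝓞 K} (hx : x ^ 2 ∣ m) (u : Kˣ) (hu : (u : K) = ι x)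
    {g : SL2 (𝓞 K)} (hg : g ∈ L (𝓞 K) q) (h10 : (q : 𝓞 K) * m ∣ g 1 0) :
    ∃ h ∈ L (𝓞 K) q, h 0 0 = g 0 0 ∧ h 0 1 = g 0 1 * x ^ 2 ∧
      inc K h = D u * inc K g * (D u)⁻¹ := by
  obtain ⟨t, ht⟩ := h10
  obtain ⟨y, rfl⟩ := hx
  obtain ⟨h1, h2, -, h4⟩ := mem_L.1 hg
  have hx0 : ι x ≠ 0 := hu ▸ u.ne_zero
  have hux : ((u⁻¹ : Kˣ) : K) = (ι x)⁻¹ := by rw [← hu]; simp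
  have hdet := det_eq g
  refine ⟨mk (g 0 0) (g 0 1 * x ^ 2) (q * (y * t)) (g 1 1)
    (by rw [ht] at hdet; linear_combination hdet), mem_L.2 ⟨?_, ?_, ?_, ?_⟩, ?_, ?_, ?_⟩
  · simpa using h1
  · simpa using h2.mul_right _
  · simp
  · simpa using h4
  · simp
  · simp
  · rw [← D_inv]
    apply ext2
    · simp [hu, hux]
      field_simp
    · simp [hu]
      ring
    · simp [hux, ht]
      field_simp
    · simp [hu, hux]
      field_simp

lemma inv_mul_mem_L {n : ℕ} {g g' : SL2 (𝓞 K)} (h00 : g 0 0 = g' 0 0)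
    (h1 : (n : 𝓞 K) ∣ g 0 1) (h2 : (n : 𝓞 K) ∣ g 1 0) (h3 : (n : 𝓞 K) ∣ g' 0 1)
    (h4 : (n : 𝓞 K) ∣ g' 1 0) : g⁻¹ * g' ∈ L (𝓞 K) n := by
  obtain ⟨r1, hr1⟩ := h1
  obtain ⟨r2, hr2⟩ := h2
  obtain ⟨r3, hr3⟩ := h3
  obtain ⟨r4, hr4⟩ := h4
  have d1 := det_eq g
  have d2 := det_eq g'
  rw [mem_L]
  refine ⟨⟨r1 * g 1 0 - r1 * g' 1 0, ?_⟩, ⟨g 1 1 * r3 - r1 * g' 1 1, ?_⟩,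
    ⟨g 0 0 * r4 - g' 0 0 * r2, ?_⟩, ⟨r3 * g' 1 0 - g 1 0 * r3, ?_⟩⟩
  · simp
    linear_combination d1 + (g 1 0 - g' 1 0) * hr1 - g 1 1 * h00
  · simp
    linear_combination g 1 1 * hr3 - g' 1 1 * hr1
  · simp
    linear_combination g 0 0 * hr4 - g' 0 0 * hr2
  · simp
    linear_combination d2 + (g' 1 0 - g 1 0) * hr3 + g' 1 1 * h00

/-- The case of `sym_mul_sq` in which the rows belong to matrices `g`, `g'` with highly divisible
off-diagonal entries. The quotient of `g` and `g'` then lies in a deep congruence subgroup, on which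
conjugation by the diagonal matrix of `x` is trivial modulo elementary matrices. -/
lemma sym_mul_sq_aux (hK : 1 < Fintype.card (InfinitePlace K)) (hk : 1 ≤ k)
    (hπ : ∀ g, π g = 1 ↔ g.1 ∈ E (𝓞 K) k) {a x m : 𝓞 K} {X : ℕ} (hX : 1 ≤ X)
    (hx : x ∣ (X : 𝓞 K)) (hm : m = (((k * X ^ 2) ^ 2 : ℕ) : 𝓞 K)) {g g' : SL2 (𝓞 K)}
    (hg : g ∈ L (𝓞 K) (k ^ 2)) (hg' : g' ∈ L (𝓞 K) (k ^ 2)) (hg00 : g 0 0 = a)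
    (hg00' : g' 0 0 = a)
    (h1 : ((k ^ 2 : ℕ) : 𝓞 K) * m ∣ g 0 1) (h2 : ((k ^ 2 : ℕ) : 𝓞 K) * m ∣ g 1 0)
    (h3 : ((k ^ 2 : ℕ) : 𝓞 K) * m ∣ g' 0 1) (h4 : ((k ^ 2 : ℕ) : 𝓞 K) * m ∣ g' 1 0) :
    sym π a (g 0 1 * x ^ 2) * sym π a (g' 0 1) = sym π a (g' 0 1 * x ^ 2) * sym π a (g 0 1) := by
  have hX0 : (X : 𝓞 K) ≠ 0 := by exact_mod_cast (by omega : X ≠ 0)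
  have hx0 : ι x ≠ 0 := by
    rintro hx0
    rw [map_eq_zero_iff _ RingOfIntegers.coe_injective] at hx0
    rw [hx0, zero_dvd_iff] at hx
    exact hX0 hx
  obtain ⟨u, hu⟩ : ∃ u : Kˣ, (u : K) = ι x := ⟨Units.mk0 (ι x) hx0, rfl⟩
  have hxm : x ^ 2 ∣ m := by
    refine (pow_dvd_pow_of_dvd hx 2).trans ⟨k ^ 2 * X ^ 2, ?_⟩
    rw [hm]; push_cast; ring
  obtain ⟨f, hf, hf00, hf01, hfD⟩ := exists_D_conj hxm u hu hg h2
  obtain ⟨f', hf', hf00', hf01', hfD'⟩ := exists_D_conj hxm u hu hg' h4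
  have hmd : m ∣ ((k ^ 2 : ℕ) : 𝓞 K) * m := dvd_mul_left _ _
  have hδ : g⁻¹ * g' ∈ L (𝓞 K) ((k * X ^ 2) ^ 2) := by
    refine inv_mul_mem_L (hg00.trans hg00'.symm) ?_ ?_ ?_ ?_ <;> rw [← hm]
    exacts [hmd.trans h1, hmd.trans h2, hmd.trans h3, hmd.trans h4]
  have hD := D_comm_mem_EK hK hk hX hx u hu hδ
  have hE : (g⁻¹ * g')⁻¹ * (f⁻¹ * f') ∈ E (𝓞 K) k := by
    rw [← inc_mem_EK]
    convert hD using 1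
    simp only [map_mul, map_inv, hfD, hfD']
    group
  have e5 : π (⟨g, hg⟩⁻¹ * ⟨g', hg'⟩) = π (⟨f, hf⟩⁻¹ * ⟨f', hf'⟩) := by
    refine pi_eq hπ ?_
    rw [Subgroup.coe_mul, Subgroup.coe_mul, Subgroup.coe_inv, Subgroup.coe_inv]
    exact hE
  rw [map_mul, map_mul, map_inv, map_inv, inv_mul_eq_iff_eq_mul] at e5
  rw [sym_eq hπ hg hg00 rfl, sym_eq hπ hg' hg00' rfl, sym_eq hπ hf (hf00.trans hg00) hf01,
    sym_eq hπ hf' (hf00'.trans hg00') hf01', e5, mul_left_comm, mul_inv_cancel_left, mul_comm]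

/-- The effect on the symbol of multiplying `b` by a square does not depend on `b`. -/
lemma sym_mul_sq (hK : 1 < Fintype.card (InfinitePlace K)) (hk : 1 ≤ k)
    (hπ : ∀ g, π g = 1 ↔ g.1 ∈ E (𝓞 K) k) {a b b' x : 𝓞 K} {X : ℕ} (hX : 1 ≤ X)
    (hx : x ∣ (X : 𝓞 K)) (haX : IsCoprime a (X : 𝓞 K)) (h : Row (k ^ 2) a b)
    (h' : Row (k ^ 2) a b') :
    sym π a (b * x ^ 2) * sym π a b' = sym π a (b' * x ^ 2) * sym π a b := by
  have hax : IsCoprime a x := haX.of_isCoprime_of_dvd_right hx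
  have hak : IsCoprime a (k : 𝓞 K) :=
    (isCoprime_of_dvd_sub_one h.1).of_isCoprime_of_dvd_right natCast_dvd_sq
  obtain ⟨m, hm⟩ : ∃ m : 𝓞 K, m = (((k * X ^ 2) ^ 2 : ℕ) : 𝓞 K) := ⟨_, rfl⟩
  have ham : IsCoprime a m := by
    rw [hm]
    push_cast
    exact (hak.mul_right haX.pow_right).pow_right
  obtain ⟨t, g, hg, hg00, hg01, hgm, hgm'⟩ := h.exists_norm ham
  obtain ⟨t', g', hg', hg00', hg01', hgm1, hgm1'⟩ := h'.exists_norm ham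
  have key := sym_mul_sq_aux hK hk hπ hX hx hm hg hg' hg00 hg00' hgm hgm' hgm1 hgm1'
  have hq : ∀ t : 𝓞 K, ((k ^ 2 : ℕ) : 𝓞 K) ∣ ((k ^ 2 : ℕ) : 𝓞 K) * t := fun t => dvd_mul_right _ _
  have aux : ∀ b t : 𝓞 K, Row (k ^ 2) a b →
      sym π a ((b + a * (((k ^ 2 : ℕ) : 𝓞 K) * t)) * x ^ 2) = sym π a (b * x ^ 2) := by
    intro b t hb
    rw [← sym_add_right hπ (hb.mul_sq hax) ((hq t).mul_right (x ^ 2))]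
    congr 1
    ring
  rw [hg01, hg01', aux b t h, aux b' t' h', sym_add_right hπ h (hq t),
    sym_add_right hπ h' (hq t')] at key
  exact key

end NF8

/-! ### Uniform torsion -/

section NF9

set_option linter.unusedSectionVars false

variable {K : Type*} [Field K] [NumberField K]

lemma not_isUnit_natCast {n : ℕ} (hn : 2 ≤ n) : ¬ IsUnit (n : 𝓞 K) := by
  intro h
  have h1 := absNorm_natCast (K := K) n
  rw [Ideal.span_singleton_eq_top.2 h, Ideal.absNorm_top] at h1
  have h2 : 0 < Module.finrank ℤ (𝓞 K) := Module.finrank_pos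
  have := Nat.one_lt_pow h2.ne' (by omega : 1 < n)
  omega

lemma exists_nat_coprime {x : 𝓞 K} {n : ℕ} (hn : 2 ≤ n) (h : IsCoprime x (n : 𝓞 K)) :
    ∃ X : ℕ, 1 ≤ X ∧ x ∣ (X : 𝓞 K) ∧ X.Coprime n := by
  have hx : x ≠ 0 := by
    rintro rfl
    exact not_isUnit_natCast hn (isCoprime_zero_left.1 h)
  obtain ⟨A, hA, hxA⟩ := exists_nat_dvd hx
  obtain ⟨a, b, j, hab, ha, hb⟩ := exists_decomp A n hA
  refine ⟨b, Nat.pos_of_ne_zero ?_, ?_, hb⟩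
  · rintro rfl
    omega
  · have h1 : IsCoprime x (a : 𝓞 K) := by
      refine (h.pow_right (n := j)).of_isCoprime_of_dvd_right ?_
      exact_mod_cast (Nat.cast_dvd_cast ha : (a : 𝓞 K) ∣ ((n ^ j : ℕ) : 𝓞 K))
    refine h1.dvd_of_dvd_mul_left ?_
    rw [hab] at hxA
    exact_mod_cast hxA

variable {k : ℕ} {A : Type*} [CommGroup A]

/-- The factor by which the symbol `sym π p b` changes when `b` is multiplied by `x²`. -/
noncomputable def phi (π : L (𝓞 K) (k ^ 2) →* A) (p : ℕ) (x : 𝓞 K) : A :=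
  sym π (p : 𝓞 K) (((k ^ 2 : ℕ) : 𝓞 K) * x ^ 2) * (sym π (p : 𝓞 K) ((k ^ 2 : ℕ) : 𝓞 K))⁻¹

variable {π : L (𝓞 K) (k ^ 2) →* A}

lemma row_base {p : ℕ} (hp : ((k ^ 2 : ℕ) : 𝓞 K) ∣ (p : 𝓞 K) - 1) :
    Row (k ^ 2) (p : 𝓞 K) ((k ^ 2 : ℕ) : 𝓞 K) :=
  ⟨hp, dvd_rfl, isCoprime_of_dvd_sub_one hp⟩

lemma sym_mul_sq_phi (hK : 1 < Fintype.card (InfinitePlace K)) (hk : 1 ≤ k)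
    (hπ : ∀ g, π g = 1 ↔ g.1 ∈ E (𝓞 K) k) {p : ℕ} (hp2 : 2 ≤ p)
    (hp : ((k ^ 2 : ℕ) : 𝓞 K) ∣ (p : 𝓞 K) - 1) {x b : 𝓞 K} (hx : IsCoprime x (p : 𝓞 K))
    (hb : Row (k ^ 2) (p : 𝓞 K) b) : sym π (p : 𝓞 K) (b * x ^ 2) = sym π (p : 𝓞 K) b * phi π p x := by
  obtain ⟨X, hX, hxX, hXp⟩ := exists_nat_coprime hp2 hx
  have := sym_mul_sq hK hk hπ hX hxX (isCoprime_natCast hXp.symm) hb (row_base hp)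
  rw [phi, eq_mul_inv_of_mul_eq this]
  rw [mul_comm (sym π (p : 𝓞 K) (((k ^ 2 : ℕ) : 𝓞 K) * x ^ 2)), mul_assoc]

lemma phi_mul (hK : 1 < Fintype.card (InfinitePlace K)) (hk : 1 ≤ k)
    (hπ : ∀ g, π g = 1 ↔ g.1 ∈ E (𝓞 K) k) {p : ℕ} (hp2 : 2 ≤ p)
    (hp : ((k ^ 2 : ℕ) : 𝓞 K) ∣ (p : 𝓞 K) - 1) {x y : 𝓞 K} (hx : IsCoprime x (p : 𝓞 K))
    (hy : IsCoprime y (p : 𝓞 K)) : phi π p (x * y) = phi π p x * phi π p y := by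
  have h1 := sym_mul_sq_phi hK hk hπ hp2 hp hy ((row_base hp).mul_sq hx.symm)
  have h2 := sym_mul_sq_phi hK hk hπ hp2 hp hx (row_base hp)
  rw [h2] at h1
  rw [phi, mul_pow, ← mul_assoc, h1, mul_inv_eq_iff_eq_mul, mul_assoc, mul_comm]

lemma phi_one (p : ℕ) : phi π p 1 = 1 := by
  simp [phi]

lemma phi_pow (hK : 1 < Fintype.card (InfinitePlace K)) (hk : 1 ≤ k)
    (hπ : ∀ g, π g = 1 ↔ g.1 ∈ E (𝓞 K) k) {p : ℕ} (hp2 : 2 ≤ p)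
    (hp : ((k ^ 2 : ℕ) : 𝓞 K) ∣ (p : 𝓞 K) - 1) {x : 𝓞 K} (hx : IsCoprime x (p : 𝓞 K)) (n : ℕ) :
    phi π p (x ^ n) = phi π p x ^ n := by
  induction n with
  | zero => simp [phi_one]
  | succ n ih => rw [pow_succ, phi_mul hK hk hπ hp2 hp hx.pow_left hx, ih, pow_succ]

lemma phi_congr (hπ : ∀ g, π g = 1 ↔ g.1 ∈ E (𝓞 K) k) {p : ℕ}
    (hp : ((k ^ 2 : ℕ) : 𝓞 K) ∣ (p : 𝓞 K) - 1) {x y : 𝓞 K} (hx : IsCoprime x (p : 𝓞 K))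
    (hxy : (p : 𝓞 K) ∣ y - x) : phi π p y = phi π p x := by
  obtain ⟨r, hr⟩ := hxy
  have := sym_add_right hπ ((row_base hp).mul_sq hx.symm)
    (dvd_mul_right ((k ^ 2 : ℕ) : 𝓞 K) (2 * x * r + p * r ^ 2))
  rw [phi, phi, ← this]
  congr 2
  rw [show y = x + p * r by linear_combination hr]
  ring

/-- The value `phi π p x` depends only on `p` modulo `k⁴ x²`. -/
lemma phi_change (hπ : ∀ g, π g = 1 ↔ g.1 ∈ E (𝓞 K) k) {p p' : ℕ}
    (hp : ((k ^ 2 : ℕ) : 𝓞 K) ∣ (p : 𝓞 K) - 1) {x : 𝓞 K} (hx : IsCoprime x (p : 𝓞 K))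
    (hpp : (((k ^ 2) ^ 2 : ℕ) : 𝓞 K) * x ^ 2 ∣ (p' : 𝓞 K) - p) : phi π p' x = phi π p x := by
  obtain ⟨r, hr⟩ := hpp
  rw [Nat.cast_pow (k ^ 2) 2] at hr
  have h1 := sym_add_left hπ ((row_base hp).mul_sq hx.symm)
    (dvd_mul_right ((k ^ 2 : ℕ) : 𝓞 K) r)
  have h2 := sym_add_left hπ (row_base hp)
    (dvd_mul_right ((k ^ 2 : ℕ) : 𝓞 K) (x ^ 2 * r))
  rw [phi, phi, ← h1, ← h2]
  congr 2
  · linear_combination hr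
  · congr 1
    linear_combination hr

lemma phi_pow_HZ (hK : 1 < Fintype.card (InfinitePlace K)) (hk : 1 ≤ k)
    (hπ : ∀ g, π g = 1 ↔ g.1 ∈ E (𝓞 K) k) {p : ℕ} (hpp : p.Prime)
    (hp : ((k ^ 2 : ℕ) : 𝓞 K) ∣ (p : 𝓞 K) - 1) {x : 𝓞 K} (hx : IsCoprime x (p : 𝓞 K)) :
    phi π p x ^ (HZ (Module.finrank ℤ (𝓞 K)) p).natAbs = 1 := by
  rw [← phi_pow hK hk hπ hpp.two_le hp hx,
    phi_congr hπ hp isCoprime_one_left (pow_HZ hpp hx), phi_one]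

/-- The exponent bounding the order of the values of `phi`: the part of the order that is built from
primes dividing `k` is controlled by `HZ d (1 + k⁴)`, the rest by `HZ d 2`. -/
noncomputable def expo (K : Type*) [Field K] [NumberField K] (k : ℕ) : ℕ :=
  (HZ (Module.finrank ℤ (𝓞 K)) (1 + ((k ^ 2) ^ 2 : ℕ)) * HZ (Module.finrank ℤ (𝓞 K)) 2).natAbs

lemma expo_pos (hk : 1 ≤ k) : 1 ≤ expo K k := by
  rw [expo, Nat.one_le_iff_ne_zero, Int.natAbs_ne_zero]
  refine mul_ne_zero (HZ_ne_zero ?_) (HZ_ne_zero le_rfl)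
  have : 1 ≤ (k ^ 2) ^ 2 := Nat.one_le_pow _ _ (Nat.one_le_pow _ _ hk)
  omega

/-- Uniform torsion: the value `phi π p x` is unchanged if `p` is replaced by another prime `p'` in
a suitable class, chosen so that the greatest common divisor of the two bounds `HZ d p` and
`HZ d p'` divides `expo K k`. -/
lemma phi_pow_expo (hK : 1 < Fintype.card (InfinitePlace K)) (hk : 1 ≤ k) (h2k : 2 ∣ k)
    (hπ : ∀ g, π g = 1 ↔ g.1 ∈ E (𝓞 K) k) {p : ℕ} (hpp : p.Prime)
    (hp : (((k ^ 2) ^ 2 : ℕ) : ℤ) ∣ (p : ℤ) - 1) {x : 𝓞 K} (hx : IsCoprime x (p : 𝓞 K)) :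
    phi π p x ^ expo K k = 1 := by
  set d := Module.finrank ℤ (𝓞 K) with hd
  set q := (k ^ 2) ^ 2 with hq
  have hkq : ((k ^ 2 : ℕ) : 𝓞 K) ∣ (q : 𝓞 K) := Nat.cast_dvd_cast (dvd_pow_self _ two_ne_zero)
  have h2q : 2 ∣ q := (h2k.trans (dvd_pow_self _ two_ne_zero)).trans (dvd_pow_self _ two_ne_zero)
  have hq1 : 1 ≤ q := Nat.one_le_pow _ _ (Nat.one_le_pow _ _ hk)
  have hpK : (q : 𝓞 K) ∣ (p : 𝓞 K) - 1 := by simpa using dvd_of_int (K := K) hp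
  set n := (HZ d p).natAbs with hn
  have hn1 : 1 ≤ n := by
    rw [hn, Nat.one_le_iff_ne_zero, Int.natAbs_ne_zero]
    exact HZ_ne_zero (by exact_mod_cast hpp.two_le)
  have hord : phi π p x ^ n = 1 := phi_pow_HZ hK hk hπ hpp (hkq.trans hpK) hx
  obtain ⟨na, nc, j, hnn, hna, hnc⟩ := exists_decomp n q hn1
  have hna0 : 1 ≤ na := Nat.pos_of_ne_zero fun h => by simp [h] at hnn; omega
  have hnc0 : 1 ≤ nc := Nat.pos_of_ne_zero fun h => by simp [h] at hnn; omega
  -- a representative of `x` modulo `p` prime to `q n`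
  have hqn0 : ((q * n : ℕ) : 𝓞 K) ≠ 0 := by exact_mod_cast (Nat.mul_pos hq1 hn1).ne'
  obtain ⟨s, hs⟩ := exists_coprime_add hx.symm hqn0
  set y := x + p * s with hy
  have hyp : IsCoprime y (p : 𝓞 K) := isCoprime_add_mul hx hy
  have hphi : phi π p y = phi π p x := phi_congr hπ (hkq.trans hpK) hx ⟨s, by rw [hy]; ring⟩
  obtain ⟨X, hX, hyX, hXc⟩ := exists_nat_coprime (x := y) (n := q * n * p)
    (by have := Nat.mul_le_mul (Nat.mul_pos hq1 hn1) hpp.two_le; simpa using this)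
    (by rw [Nat.cast_mul]; exact hs.mul_right hyp)
  have hXqn : X.Coprime (q * n) := hXc.coprime_mul_right_right
  have hXp : X.Coprime p := hXc.coprime_mul_left_right
  -- the residue class modulo `q n` of the new prime: `1 + q` modulo `q` and the part of `n` built
  -- from primes dividing `q`, and `2` modulo the part coprime to `q`
  have hmn : (q * na).Coprime nc :=
    Nat.Coprime.mul_left hnc.symm ((hnc.symm.pow_left j).coprime_dvd_left hna)
  have hc1 : IsCoprime (1 + (q : ℤ)) ((q * na : ℕ) : ℤ) := by
    have h1 : IsCoprime (1 + (q : ℤ)) (q : ℤ) := ⟨1, -1, by ring⟩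
    rw [Nat.cast_mul]
    refine h1.mul_right ((h1.pow_right (n := j)).of_isCoprime_of_dvd_right ?_)
    exact_mod_cast hna
  have hc2 : IsCoprime (2 : ℤ) (nc : ℤ) := by
    have : Nat.Coprime 2 nc := hnc.symm.coprime_dvd_left h2q
    exact_mod_cast Nat.isCoprime_iff_coprime.2 this
  obtain ⟨z, hz1, hz2, hz⟩ := exists_crt hmn hc1 hc2
  have hmn2 : (q * na * nc).Coprime (X ^ 2) := by
    rw [mul_assoc, ← hnn]
    exact hXqn.symm.pow_right 2
  have hpX : IsCoprime (p : ℤ) ((X ^ 2 : ℕ) : ℤ) :=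
    Nat.isCoprime_iff_coprime.2 (hXp.symm.pow_right 2)
  obtain ⟨p', -, hp', hp'z, hp'X⟩ := exists_prime (Nat.mul_pos (Nat.mul_pos hq1 hna0) hnc0)
    (Nat.one_le_pow _ _ hX) hmn2 hz hpX 0
  have hp1 : ((q * na : ℕ) : ℤ) ∣ (p' : ℤ) - (1 + q) := by
    have h1 : ((q * na : ℕ) : ℤ) ∣ ((q * na * nc : ℕ) : ℤ) := by exact_mod_cast dvd_mul_right _ _
    have := dvd_add (h1.trans hp'z) hz1
    simpa using this
  have hp2 : (nc : ℤ) ∣ (p' : ℤ) - 2 := by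
    have h1 : (nc : ℤ) ∣ ((q * na * nc : ℕ) : ℤ) := by exact_mod_cast dvd_mul_left _ _
    have := dvd_add (h1.trans hp'z) hz2
    simpa using this
  have hp'q : (q : ℤ) ∣ (p' : ℤ) - 1 := by
    have h1 : (q : ℤ) ∣ ((q * na : ℕ) : ℤ) := by exact_mod_cast dvd_mul_right _ _
    have := dvd_add (h1.trans hp1) (dvd_refl (q : ℤ))
    rw [show (p' : ℤ) - 1 = p' - (1 + q) + q by ring]
    exact this
  have hp'K : (q : 𝓞 K) ∣ (p' : 𝓞 K) - 1 := by simpa using dvd_of_int (K := K) hp'q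
  have hpp' : (q : 𝓞 K) * y ^ 2 ∣ (p' : 𝓞 K) - p := by
    have h1 : ((q * X ^ 2 : ℕ) : ℤ) ∣ (p' : ℤ) - p := by
      rw [Nat.cast_mul]
      refine IsCoprime.mul_dvd ?_ ?_ hp'X
      · exact Nat.isCoprime_iff_coprime.2
          ((hXqn.coprime_mul_right_right).symm.pow_right 2)
      · have := dvd_sub hp'q hp
        simpa using this
    have h2 := dvd_of_int (K := K) h1
    rw [Int.cast_sub, Int.cast_natCast, Int.cast_natCast] at h2
    refine dvd_trans ?_ h2
    rw [Nat.cast_mul, Nat.cast_pow X]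
    exact mul_dvd_mul_left _ (pow_dvd_pow_of_dvd hyX 2)
  have hphi' : phi π p' y = phi π p y := phi_change hπ (hkq.trans hpK) hyp hpp'
  have hyp' : IsCoprime y (p' : 𝓞 K) := by
    obtain ⟨r, hr⟩ := hpp'
    exact (isCoprime_add_mul (z := (q : 𝓞 K) * y * r) hyp.symm
      (by linear_combination hr)).symm
  have hord' : phi π p x ^ (HZ d p').natAbs = 1 := by
    rw [← hphi, ← hphi']
    exact phi_pow_HZ hK hk hπ hp' (hkq.trans hp'K) hyp'
  have hg1 := orderOf_dvd_of_pow_eq_one hord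
  have hg2 := orderOf_dvd_of_pow_eq_one hord'
  rw [hnn] at hg1
  obtain ⟨t1, t2, ht1, ht2, ht⟩ := exists_dvd_and_dvd_of_dvd_mul hg1
  have hg2' : ((orderOf (phi π p x) : ℕ) : ℤ) ∣ HZ d p' := Int.natCast_dvd.2 hg2
  rw [← orderOf_dvd_iff_pow_eq_one, expo, ← Int.natCast_dvd, ht, Nat.cast_mul]
  rw [ht, Nat.cast_mul] at hg2'
  refine mul_dvd_mul ?_ ?_
  · have h1 : (t1 : ℤ) ∣ (p' : ℤ) - (1 + q) := by
      refine dvd_trans ?_ hp1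
      exact_mod_cast ht1.mul_left q
    exact (dvd_sub_right ((dvd_mul_right _ _).trans hg2')).1 (HZ_modEq h1)
  · have h1 : (t2 : ℤ) ∣ (p' : ℤ) - 2 := by
      refine dvd_trans ?_ hp2
      exact_mod_cast ht2
    exact (dvd_sub_right ((dvd_mul_left _ _).trans hg2')).1 (HZ_modEq h1)

end NF9

/-! ### Finiteness -/

section NF10

set_option linter.unusedSectionVars false

variable {K : Type*} [Field K] [NumberField K]

/-- Every class in `A` is the symbol of a row whose first entry is an arbitrary natural number `p`
satisfying two congruences with coprime moduli, one of them also coprime to a given `N`. -/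
lemma exists_common_prime_aux {k : ℕ} {A : Type*} [CommGroup A] {π : L (𝓞 K) (k ^ 2) →* A}
    (hk : 1 ≤ k) (h2k : 2 ∣ k) (hπ : ∀ g, π g = 1 ↔ g.1 ∈ E (𝓞 K) k)
    (hsurj : Function.Surjective π) (x : A) {N : ℕ} (hN : 1 ≤ N) :
    ∃ (b : 𝓞 K) (B : ℕ) (α : ℤ), 1 ≤ B ∧ B.Coprime (k ^ 2 * N) ∧ IsCoprime α B ∧
      ∀ p : ℕ, (((k ^ 2) ^ 2 : ℕ) : ℤ) ∣ (p : ℤ) - 1 → (B : ℤ) ∣ (p : ℤ) - α →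
        Row (k ^ 2) (p : 𝓞 K) b ∧ sym π (p : 𝓞 K) b = x := by
  obtain ⟨⟨g, hg⟩, hgx⟩ := hsurj x
  have hQ1 : 1 ≤ k ^ 2 := Nat.one_le_pow _ _ hk
  have hQ2 : ((k ^ 2 : ℕ) : 𝓞 K) ∣ (((k ^ 2) ^ 2 : ℕ) : 𝓞 K) := Nat.cast_dvd_cast (dvd_pow_self _ two_ne_zero)
  obtain ⟨e, he, hge⟩ := exists_mul_mem_L (n := (k ^ 2) ^ 2) (Nat.one_le_pow _ _ hQ1) hg
  obtain ⟨h00, ⟨b2, hb⟩, -, -⟩ := mem_L.1 hge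
  have hdet := det_eq (g * e)
  have ha0 := ne_zero_of_dvd_sub_one (h2k.trans (dvd_pow_self _ two_ne_zero)) (hQ2.trans h00)
  have hcop : IsCoprime ((g * e) 0 0) (((k ^ 2 : ℕ) : 𝓞 K) * b2) := by
    refine ⟨(g * e) 1 1, -(((k ^ 2 : ℕ) : 𝓞 K) * (g * e) 1 0), ?_⟩
    rw [hb, Nat.cast_pow (k ^ 2) 2] at hdet
    linear_combination hdet
  obtain ⟨s, B, α, hB, hβB, hβα, hBQ, hαB⟩ := exists_integer_row hcop ha0 (Nat.mul_pos hQ1 hN)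
  set a := (g * e) 0 0 with ha
  set β := ((k ^ 2 : ℕ) : 𝓞 K) * b2 + a * s with hβ
  have hhL : g * e * U (((k ^ 2 : ℕ) : 𝓞 K) * s) ∈ L (𝓞 K) (k ^ 2) :=
    mul_mem (L_anti (dvd_pow_self _ two_ne_zero) hge) (U_mem_L (dvd_mul_right _ _))
  have hh00 : (g * e * U (((k ^ 2 : ℕ) : 𝓞 K) * s)) 0 0 = a := by
    rw [ha, Matrix.SpecialLinearGroup.coe_mul (g * e), Matrix.mul_apply]
    simp
  have hh01 : (g * e * U (((k ^ 2 : ℕ) : 𝓞 K) * s)) 0 1 = ((k ^ 2 : ℕ) : 𝓞 K) * β := by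
    rw [Matrix.SpecialLinearGroup.coe_mul (g * e), Matrix.mul_apply]
    rw [Fin.sum_univ_two, hb, ← ha, Nat.cast_pow (k ^ 2) 2, hβ]
    rw [U_01, U_11]
    ring
  have hsym : sym π a (((k ^ 2 : ℕ) : 𝓞 K) * β) = x := by
    rw [sym_eq hπ hhL hh00 hh01, ← hgx]
    refine (pi_eq hπ ?_).symm
    have : g⁻¹ * (g * e * U (((k ^ 2 : ℕ) : 𝓞 K) * s)) = e * U (((k ^ 2 : ℕ) : 𝓞 K) * s) := by group
    rw [this]
    exact mul_mem he (U_mem_E (natCast_dvd_sq.trans (dvd_mul_right _ _)))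
  have hrow : Row (k ^ 2) a (((k ^ 2 : ℕ) : 𝓞 K) * β) := by
    have := row_of_mem hhL
    rwa [hh00, hh01] at this
  refine ⟨((k ^ 2 : ℕ) : 𝓞 K) * β, B, α, hB, hBQ, Nat.isCoprime_iff_coprime.2 hαB, fun p hpQ hpB => ?_⟩
  have h1 : (((k ^ 2) ^ 2 : ℕ) : 𝓞 K) ∣ (p : 𝓞 K) - a := by
    have h3 : (((k ^ 2) ^ 2 : ℕ) : 𝓞 K) ∣ (p : 𝓞 K) - 1 := by simpa using dvd_of_int (K := K) hpQ
    have := dvd_sub h3 h00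
    rw [show (p : 𝓞 K) - a = p - 1 - (a - 1) by ring]
    exact this
  have h2 : β ∣ (p : 𝓞 K) - a := by
    have h3 : (B : 𝓞 K) ∣ (p : 𝓞 K) - α := by simpa using dvd_of_int (K := K) hpB
    have := dvd_sub (hβB.trans h3) hβα
    rw [show (p : 𝓞 K) - a = p - α - (a - α) by ring]
    exact this
  have hβQ : IsCoprime (((k ^ 2) ^ 2 : ℕ) : 𝓞 K) β :=
    (isCoprime_natCast (hBQ.coprime_mul_right_right.symm.pow_left 2)).of_isCoprime_of_dvd_right hβB
  obtain ⟨r, hr⟩ := hβQ.mul_dvd h1 h2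
  rw [Nat.cast_pow (k ^ 2) 2] at hr
  have hpe : (p : 𝓞 K) = a + ((k ^ 2 : ℕ) : 𝓞 K) * β * (((k ^ 2 : ℕ) : 𝓞 K) * r) := by linear_combination hr
  rw [hpe]
  exact ⟨hrow.add_left, (sym_add_left hπ hrow (dvd_mul_right _ _)).trans hsym⟩

/-- Finitely many classes in `A` are symbols of rows with one and the same first entry `p`, where
`p` is any natural number satisfying two congruences with coprime moduli. -/
lemma exists_common_prime {k : ℕ} {A : Type*} [CommGroup A] {π : L (𝓞 K) (k ^ 2) →* A}
    (hk : 1 ≤ k) (h2k : 2 ∣ k) (hπ : ∀ g, π g = 1 ↔ g.1 ∈ E (𝓞 K) k)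
    (hsurj : Function.Surjective π) (S : Finset A) :
    ∃ (b : A → 𝓞 K) (B : ℕ) (α : ℤ), 1 ≤ B ∧ B.Coprime (k ^ 2) ∧ IsCoprime α B ∧
      ∀ p : ℕ, (((k ^ 2) ^ 2 : ℕ) : ℤ) ∣ (p : ℤ) - 1 → (B : ℤ) ∣ (p : ℤ) - α →
        ∀ x ∈ S, Row (k ^ 2) (p : 𝓞 K) (b x) ∧ sym π (p : 𝓞 K) (b x) = x := by
  classical
  induction S using Finset.induction_on with
  | empty => exact ⟨0, 1, 1, le_rfl, Nat.coprime_one_left _, isCoprime_one_left, by simp⟩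
  | insert x S hx ih =>
    obtain ⟨b, B, α, hB, hBk, hα, h⟩ := ih
    obtain ⟨b', B', α', hB', hBk', hα', h'⟩ := exists_common_prime_aux hk h2k hπ hsurj x hB
    obtain ⟨z, hz, hz', hcop⟩ := exists_crt hBk'.coprime_mul_left_right.symm hα hα'
    refine ⟨Function.update b x b', B * B', z, Nat.mul_pos hB hB',
      hBk.mul_left hBk'.coprime_mul_right_right, hcop, fun p hp hpB y hy => ?_⟩
    rw [Nat.cast_mul] at hpB
    rcases Finset.mem_insert.1 hy with rfl | hyS
    · rw [Function.update_self]
      refine h' p hp ?_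
      have := dvd_add ((Dvd.intro_left _ rfl).trans hpB) hz'
      simpa using this
    · rw [Function.update_of_ne (by rintro rfl; exact hx hyS)]
      refine h p hp ?_ y hyS
      have := dvd_add ((Dvd.intro _ rfl).trans hpB) hz
      simpa using this

/-- The number of `n`-th roots of unity modulo a prime `p > n` is bounded independently of `p`,
since these roots are determined by their residues at the at most `d` primes above `p`. -/
lemma card_rootsOfUnity_le {p n : ℕ} (hp : p.Prime) (hn : 1 ≤ n) (hnp : n < p) :
    Nat.card (rootsOfUnity n (𝓞 K ⧸ Ideal.span {(p : 𝓞 K)})) ≤ n ^ Module.finrank ℤ (𝓞 K) := by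
  classical
  have : NeZero n := ⟨by omega⟩
  have hfin : {P : Ideal (𝓞 K) | P.IsMaximal ∧ (p : 𝓞 K) ∈ P}.Finite := by
    by_contra hinf
    obtain ⟨T, hT, hcard⟩ := Set.Infinite.exists_subset_card_eq hinf
      (Module.finrank ℤ (𝓞 K) + 1)
    have := card_maximal_le hp T (fun P hP => hT hP)
    omega
  set T := hfin.toFinset with hTdef
  have hT : ∀ P ∈ T, P.IsMaximal ∧ (p : 𝓞 K) ∈ P := fun P hP => by simpa [hTdef] using hP
  have hle : ∀ P : T, Ideal.span {(p : 𝓞 K)} ≤ P.1 := fun P =>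
    (Ideal.span_singleton_le_iff_mem _).2 (hT P.1 P.2).2
  have hmax : ∀ P : T, P.1.IsMaximal := fun P => (hT P.1 P.2).1
  have hcop : IsCoprime (n : 𝓞 K) (p : 𝓞 K) :=
    isCoprime_natCast (Nat.coprime_of_lt_prime (by omega) hnp hp).symm
  let Φ : rootsOfUnity n (𝓞 K ⧸ Ideal.span {(p : 𝓞 K)}) →*
      ((P : T) → rootsOfUnity n (𝓞 K ⧸ P.1)) :=
    MonoidHom.pi fun P => restrictRootsOfUnity (Ideal.Quotient.factor (hle P)) n
  have hΦ : Function.Injective Φ := by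
    rw [injective_iff_map_eq_one]
    intro w hw
    obtain ⟨y, hy⟩ := Ideal.Quotient.mk_surjective ((w.1 : (𝓞 K ⧸ Ideal.span {(p : 𝓞 K)})ˣ) :
      𝓞 K ⧸ Ideal.span {(p : 𝓞 K)})
    have hyP : ∀ P : Ideal (𝓞 K), P.IsMaximal → (p : 𝓞 K) ∈ P → y - 1 ∈ P := by
      intro P hP hpP
      have hPT : P ∈ T := by rw [hTdef, Set.Finite.mem_toFinset]; exact ⟨hP, hpP⟩
      have h1 := congrArg (fun z => ((z.1 : (𝓞 K ⧸ P)ˣ) : 𝓞 K ⧸ P)) (congrFun hw ⟨P, hPT⟩)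
      have h2 : Ideal.Quotient.factor (hle ⟨P, hPT⟩) (Ideal.Quotient.mk _ y) = 1 := by
        rw [hy]
        exact h1
      rw [Ideal.Quotient.factor_mk] at h2
      rwa [← Ideal.Quotient.eq, map_one]
    have hyn : (p : 𝓞 K) ∣ y ^ n - 1 := by
      rw [← Ideal.mem_span_singleton, ← Ideal.Quotient.eq, map_pow, hy, map_one]
      exact congrArg Units.val ((mem_rootsOfUnity _ _).1 w.2)
    rw [← geom_sum_mul] at hyn
    have hsum : IsCoprime (∑ i ∈ Finset.range n, y ^ i) (p : 𝓞 K) := by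
      refine isCoprime_of_forall_maximal fun P hP hpP hS => ?_
      have h1 : ∑ i ∈ Finset.range n, (y ^ i - 1) ∈ P := by
        refine P.sum_mem fun i _ => ?_
        rw [← mul_geom_sum]
        exact P.mul_mem_right _ (hyP P hP hpP)
      rw [Finset.sum_sub_distrib] at h1
      have h2 := P.sub_mem hS h1
      simp only [Finset.sum_const, Finset.card_range, nsmul_eq_mul, mul_one, sub_sub_cancel] at h2
      obtain ⟨u, v, huv⟩ := hcop
      exact hP.ne_top ((Ideal.eq_top_iff_one _).2
        (huv ▸ P.add_mem (P.mul_mem_left u h2) (P.mul_mem_left v hpP)))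
    have hy1 : (p : 𝓞 K) ∣ y - 1 := hsum.symm.dvd_of_dvd_mul_left hyn
    apply Subtype.ext
    apply Units.ext
    rw [← hy]
    rw [← Ideal.mem_span_singleton, ← Ideal.Quotient.eq, map_one] at hy1
    exact hy1
  have hdom : ∀ P : T, IsDomain (𝓞 K ⧸ P.1) := fun P =>
    (Ideal.Quotient.isDomain_iff_prime _).2 (hmax P).isPrime
  have hF : ∀ P : T, Finite (rootsOfUnity n (𝓞 K ⧸ P.1)) := fun P => inferInstance
  calc _ ≤ Nat.card ((P : T) → rootsOfUnity n (𝓞 K ⧸ P.1)) := Nat.card_le_card_of_injective _ hΦ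
    _ = ∏ P : T, Nat.card (rootsOfUnity n (𝓞 K ⧸ P.1)) := Nat.card_pi
    _ ≤ ∏ _P : T, n := by
        refine Finset.prod_le_prod' fun P _ => ?_
        exact card_rootsOfUnity _ _
    _ = n ^ T.card := by simp
    _ ≤ _ := Nat.pow_le_pow_right hn (card_maximal_le hp T hT)

lemma card_quotient_range_pow {G : Type*} [CommGroup G] [Finite G] (n : ℕ) :
    Nat.card (G ⧸ (powMonoidHom n : G →* G).range) = Nat.card (powMonoidHom n : G →* G).ker := by
  have h1 := Subgroup.card_eq_card_quotient_mul_card_subgroup (powMonoidHom n : G →* G).range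
  have h2 := Subgroup.card_eq_card_quotient_mul_card_subgroup (powMonoidHom n : G →* G).ker
  rw [Nat.card_congr (QuotientGroup.quotientKerEquivRange (powMonoidHom n : G →* G)).toEquiv] at h2
  rw [h2, mul_comm] at h1
  exact (Nat.eq_of_mul_eq_mul_right Nat.card_pos h1).symm

/-- Finite subsets of `A` have bounded cardinality: their elements are symbols `sym π p (b x)` with a
common prime `p`, and are separated by the classes of the `b x` in the units modulo `p` modulo
`n`-th powers, where `n = 2 * expo K k`. -/
lemma card_le {k : ℕ} {A : Type*} [CommGroup A] {π : L (𝓞 K) (k ^ 2) →* A}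
    (hK : 1 < Fintype.card (InfinitePlace K))
    (hk : 1 ≤ k) (h2k : 2 ∣ k) (hπ : ∀ g, π g = 1 ↔ g.1 ∈ E (𝓞 K) k)
    (hsurj : Function.Surjective π) (S : Finset A) :
    S.card ≤ (2 * expo K k) ^ Module.finrank ℤ (𝓞 K) := by
  obtain ⟨b, B, α, hB, hBk, hα, h⟩ := exists_common_prime hk h2k hπ hsurj S
  have hQ1 : 1 ≤ (k ^ 2) ^ 2 := Nat.one_le_pow _ _ (Nat.one_le_pow _ _ hk)
  obtain ⟨p, hpn, hp, hpQ, hpB⟩ := exists_prime hQ1 hB (hBk.symm.pow_left 2)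
    (isCoprime_one_left : IsCoprime (1 : ℤ) (((k ^ 2) ^ 2 : ℕ) : ℤ)) hα (2 * expo K k)
  specialize h p hpQ hpB
  have hpK : ((k ^ 2 : ℕ) : 𝓞 K) ∣ (p : 𝓞 K) - 1 := by
    have h1 : (((k ^ 2) ^ 2 : ℕ) : 𝓞 K) ∣ (p : 𝓞 K) - 1 := by simpa using dvd_of_int (K := K) hpQ
    exact natCast_dvd_sq.trans h1
  have hp0 : (p : 𝓞 K) ≠ 0 := by exact_mod_cast hp.ne_zero
  set I := Ideal.span {(p : 𝓞 K)} with hI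
  have hfin : Finite (𝓞 K ⧸ I) := Ideal.finiteQuotientOfFreeOfNeBot I (by simpa [hI] using hp0)
  set n := 2 * expo K k with hn
  have hn1 : 1 ≤ n := by have := expo_pos (K := K) hk; omega
  have hunit : ∀ y : 𝓞 K, IsCoprime (p : 𝓞 K) y → IsUnit (Ideal.Quotient.mk I y) := by
    rintro y ⟨u, v, huv⟩
    refine IsUnit.of_mul_eq_one (Ideal.Quotient.mk I v) ?_
    rw [← map_mul, ← map_one (Ideal.Quotient.mk I), Ideal.Quotient.eq, hI, Ideal.mem_span_singleton]
    exact ⟨-u, by linear_combination huv⟩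
  have hlift : ∀ y : 𝓞 K, IsUnit (Ideal.Quotient.mk I y) → IsCoprime y (p : 𝓞 K) := by
    intro y hy
    obtain ⟨w, hw⟩ := hy.exists_right_inv
    obtain ⟨v, rfl⟩ := Ideal.Quotient.mk_surjective w
    rw [← map_mul, ← map_one (Ideal.Quotient.mk I), Ideal.Quotient.eq, hI,
      Ideal.mem_span_singleton] at hw
    obtain ⟨t, ht⟩ := hw
    exact ⟨v, -t, by linear_combination ht⟩
  let f : S → (𝓞 K ⧸ I)ˣ ⧸ (powMonoidHom n : (𝓞 K ⧸ I)ˣ →* (𝓞 K ⧸ I)ˣ).range :=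
    fun x => QuotientGroup.mk (hunit (b x.1) (h x.1 x.2).1.2.2).unit
  have hf : Function.Injective f := by
    rintro ⟨x, hx⟩ ⟨y, hy⟩ hxy
    obtain ⟨hrx, hsx⟩ := h x hx
    obtain ⟨hry, hsy⟩ := h y hy
    obtain ⟨w, hw⟩ := QuotientGroup.eq.1 hxy
    obtain ⟨z, hz⟩ := Ideal.Quotient.mk_surjective (w : 𝓞 K ⧸ I)
    have hzp : IsCoprime z (p : 𝓞 K) := hlift z (hz ▸ w.isUnit)
    have hw1 := congrArg Units.val (eq_inv_mul_iff_mul_eq.1 hw)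
    have hw2 : Ideal.Quotient.mk I (b y) = Ideal.Quotient.mk I (b x * (z ^ expo K k) ^ 2) := by
      rw [map_mul, ← pow_mul, mul_comm (expo K k), ← hn, map_pow, hz]
      exact hw1.symm
    rw [Ideal.Quotient.eq, hI, Ideal.mem_span_singleton] at hw2
    obtain ⟨t, ht⟩ := hw2
    have hqt : ((k ^ 2 : ℕ) : 𝓞 K) ∣ t := by
      refine (isCoprime_of_dvd_sub_one hpK).symm.dvd_of_dvd_mul_left (z := t) ?_
      rw [← ht]
      exact dvd_sub hry.2.1 (hrx.2.1.mul_right _)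
    have hzM : IsCoprime (z ^ expo K k) (p : 𝓞 K) := hzp.pow_left
    have key := sym_add_right hπ (hrx.mul_sq hzM.symm) hqt
    rw [← ht, add_sub_cancel, sym_mul_sq_phi hK hk hπ hp.two_le hpK hzM hrx,
      phi_pow hK hk hπ hp.two_le hpK hzp, phi_pow_expo hK hk h2k hπ hp hpQ hzp, mul_one, hsx,
      hsy] at key
    exact Subtype.ext key.symm
  have h1 := Nat.card_le_card_of_injective f hf
  rw [card_quotient_range_pow] at h1
  have h2 : (powMonoidHom n : (𝓞 K ⧸ I)ˣ →* (𝓞 K ⧸ I)ˣ).ker = rootsOfUnity n (𝓞 K ⧸ I) := by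
    ext u
    simp [MonoidHom.mem_ker, mem_rootsOfUnity]
  rw [h2] at h1
  simpa using h1.trans (card_rootsOfUnity_le hp hn1 hpn)

/-- The elementary subgroup of even level `k` has finite index: modulo it, the congruence subgroup
of level `k²` is an abelian group in which all finite subsets have bounded cardinality. -/
lemma E_finiteIndex (hK : 1 < Fintype.card (InfinitePlace K)) {k : ℕ} (hk : 1 ≤ k) (h2k : 2 ∣ k) :
    (E (𝓞 K) k).FiniteIndex := by
  set H : Subgroup (L (𝓞 K) (k ^ 2)) := (E (𝓞 K) k).subgroupOf (L (𝓞 K) (k ^ 2)) with hH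
  have hnorm : H.Normal := by
    refine ⟨fun e he γ => ?_⟩
    rw [hH, Subgroup.mem_subgroupOf] at he ⊢
    have := L_conj_mem_E hK hk (inv_mem γ.2) he
    rw [Subgroup.coe_mul, Subgroup.coe_mul, Subgroup.coe_inv]
    simpa using this
  let cg : CommGroup (L (𝓞 K) (k ^ 2) ⧸ H) :=
    { (inferInstance : Group (L (𝓞 K) (k ^ 2) ⧸ H)) with
      mul_comm := by
        intro x y
        obtain ⟨γ, rfl⟩ := QuotientGroup.mk_surjective x
        obtain ⟨δ, rfl⟩ := QuotientGroup.mk_surjective y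
        rw [← QuotientGroup.mk_mul, ← QuotientGroup.mk_mul, QuotientGroup.eq, hH,
          Subgroup.mem_subgroupOf]
        have := L_comm_mem_E hK hk δ.2 (inv_mem γ.2)
        rw [Subgroup.coe_mul, Subgroup.coe_inv, Subgroup.coe_mul, Subgroup.coe_mul]
        convert this using 1
        group }
  let π : L (𝓞 K) (k ^ 2) →* (L (𝓞 K) (k ^ 2) ⧸ H) := QuotientGroup.mk' H
  have hπ : ∀ g, π g = 1 ↔ g.1 ∈ E (𝓞 K) k := fun g => by
    rw [← Subgroup.mem_subgroupOf, ← hH]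
    exact QuotientGroup.eq_one_iff g
  have hbound := card_le hK hk h2k hπ (QuotientGroup.mk'_surjective H)
  have hfin : Finite (L (𝓞 K) (k ^ 2) ⧸ H) := by
    by_contra hinf
    rw [not_finite_iff_infinite] at hinf
    obtain ⟨S, hS⟩ := Infinite.exists_subset_card_eq (L (𝓞 K) (k ^ 2) ⧸ H)
      ((2 * expo K k) ^ Module.finrank ℤ (𝓞 K) + 1)
    have := hbound S
    omega
  have hrel : (E (𝓞 K) k).relIndex (L (𝓞 K) (k ^ 2)) ≠ 0 :=
    (Subgroup.finiteIndex_of_finite_quotient (H := H)).index_ne_zero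
  have hq0 : ((k ^ 2 : ℕ) : 𝓞 K) ≠ 0 := by
    exact_mod_cast (pow_pos hk 2 : 0 < k ^ 2).ne'
  have hR : Finite (𝓞 K ⧸ Ideal.span {((k ^ 2 : ℕ) : 𝓞 K)}) :=
    Ideal.finiteQuotientOfFreeOfNeBot _ (by simpa using hq0)
  have hL : (L (𝓞 K) (k ^ 2)).index ≠ 0 := by
    unfold L
    exact (inferInstance : (MonoidHom.ker _).FiniteIndex).index_ne_zero
  refine ⟨fun h0 => ?_⟩
  have h1 := Subgroup.relIndex_mul_index
    (inf_le_right : E (𝓞 K) k ⊓ L (𝓞 K) (k ^ 2) ≤ L (𝓞 K) (k ^ 2))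
  rw [Subgroup.inf_relIndex_right] at h1
  have h2 := Subgroup.index_dvd_of_le
    (inf_le_left : E (𝓞 K) k ⊓ L (𝓞 K) (k ^ 2) ≤ E (𝓞 K) k)
  rw [h0, zero_dvd_iff, ← h1] at h2
  exact mul_ne_zero hrel hL h2

end NF10
end UnipGen

open UnipGen in
/-- For a number field `K` which is neither `ℚ` nor imaginary quadratic
(equivalently, `K` has at least two archimedean places) and an integer `k ≥ 1`, the
subgroup of `SL_2(O_K)` generated by the elementary matrices `(1, b; 0, 1)` and
`(1, 0; c, 1)` with `b, c ∈ k·O_K` has finite index in `SL_2(O_K)`. -/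
theorem unipotent_generators_sl_two_ring_of_integers
    (K : Type*) [Field K] [NumberField K]
    (hK : 1 < Fintype.card (InfinitePlace K)) (k : ℕ) (hk : 1 ≤ k) :
    (Subgroup.closure
      ({g : Matrix.SpecialLinearGroup (Fin 2) (𝓞 K) |
          ∃ b : 𝓞 K, (k : 𝓞 K) ∣ b ∧ g.1 = !![1, b; 0, 1]} ∪
       {g : Matrix.SpecialLinearGroup (Fin 2) (𝓞 K) |
          ∃ c : 𝓞 K, (k : 𝓞 K) ∣ c ∧ g.1 = !![1, 0; c, 1]})).FiniteIndex := by
  have h := E_finiteIndex hK (k := 2 * k) (by omega) (dvd_mul_right 2 k)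
  have hle : E (𝓞 K) (2 * k) ≤ Subgroup.closure
      ({g : Matrix.SpecialLinearGroup (Fin 2) (𝓞 K) |
          ∃ b : 𝓞 K, (k : 𝓞 K) ∣ b ∧ g.1 = !![1, b; 0, 1]} ∪
       {g : Matrix.SpecialLinearGroup (Fin 2) (𝓞 K) |
          ∃ c : 𝓞 K, (k : 𝓞 K) ∣ c ∧ g.1 = !![1, 0; c, 1]}) := by
    unfold E
    refine Subgroup.closure_mono ?_
    rintro g (⟨x, rfl⟩ | ⟨x, rfl⟩)
    · exact Or.inl ⟨_, ⟨2 * x, by push_cast; ring⟩, rfl⟩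
    · exact Or.inr ⟨_, ⟨2 * x, by push_cast; ring⟩, rfl⟩
  exact Subgroup.finiteIndex_of_le hle
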